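/- arXiv:2206.01913 — 7 statements merged into one kernel-verified Lean document; each statement's English description precedes it below -/
import Mathlib

section
/- Let K ⊆ ℝⁿ be a compact set and let σ : ℝ → ℝ be continuously differentiable and not a polynomial. Suppose f : K → ℝ^m satisfies ‖f(x) − f(y)‖_∞ ≤ L‖x − y‖_∞ for all x, y ∈ K. Then for every ε > 0 there exist k ∈ ℕ, matrices A ∈ ℝ^{k×n}, C ∈ ℝ^{m×k} and a vector b ∈ ℝ^k such that the one-hidden-layer neural network φ(x) = C·σ(Ax + b) satisfies sup_{x ∈ K} ‖f(x) − φ(x)‖_∞ < ε and ‖φ(x) − φ(y)‖_∞ ≤ (L + ε)‖x − y‖_∞ for all x, y ∈ K. -/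
open Set Filter Topology MeasureTheory

lemma antideriv_poly (j : ℕ) (p : Polynomial ℝ) (hp : p.natDegree < j ∨ p.degree < j) :
    ∃ P : Polynomial ℝ, P.degree < (j + 1 : ℕ) ∧ P.derivative = p := by
  have hp' : p.degree < j := by
    rcases hp with h | h
    · exact lt_of_le_of_lt Polynomial.degree_le_natDegree (by exact_mod_cast h)
    · exact h
  refine ⟨∑ k ∈ Finset.range j, Polynomial.monomial (k+1) (p.coeff k / (k+1)), ?_, ?_⟩
  · refine lt_of_le_of_lt (Polynomial.degree_sum_le _ _) ?_
    rw [Finset.sup_lt_iff (by exact_mod_cast WithBot.bot_lt_coe (j+1))]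
    intro k hk
    refine lt_of_le_of_lt (Polynomial.degree_monomial_le _ _) ?_
    have := Finset.mem_range.1 hk
    exact_mod_cast (by omega : k + 1 < j + 1)
  · rw [Polynomial.derivative_sum]
    ext k
    simp only [Polynomial.derivative_monomial, Polynomial.finsetSum_coeff, Polynomial.coeff_monomial]
    have : ∀ i : ℕ, p.coeff i / ((i:ℝ)+1) * ((i + 1 : ℕ) : ℝ) = p.coeff i := by
      intro i; have : (i:ℝ) + 1 ≠ 0 := by positivity
      push_cast; field_simp
    simp only [this, Nat.add_sub_cancel]
    rw [Finset.sum_ite_eq' ]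
    split_ifs with h
    · rfl
    · symm; apply Polynomial.coeff_eq_zero_of_degree_lt
      refine lt_of_lt_of_le hp' ?_
      simp at h; exact_mod_cast h

lemma poly_of_deriv_poly (j : ℕ) (u : ℝ → ℝ) (hu : Differentiable ℝ u) (p : Polynomial ℝ)
    (hp : p.degree < j) (h : ∀ t, deriv u t = p.eval t) :
    ∃ P : Polynomial ℝ, P.degree < (j + 1 : ℕ) ∧ ∀ t, u t = P.eval t := by
  obtain ⟨P, hP, hd⟩ := antideriv_poly j p (Or.inr hp)
  have hc : ∀ t, (u t - P.eval t) = (u 0 - P.eval 0) := by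
    intro t
    apply is_const_of_deriv_eq_zero (f := fun t => u t - P.eval t) (hu.sub P.differentiable)
    intro x
    have := (hu x).hasDerivAt.sub (P.hasDerivAt x)
    rw [hd, h, sub_self] at this
    exact this.deriv
  refine ⟨P + Polynomial.C (u 0 - P.eval 0), ?_, ?_⟩
  · refine lt_of_le_of_lt (Polynomial.degree_add_le _ _) (max_lt hP ?_)
    refine lt_of_le_of_lt Polynomial.degree_C_le ?_
    exact_mod_cast Nat.succ_pos j
  · intro t; simp; linarith [hc t]

lemma poly_of_iteratedDeriv (j : ℕ) : ∀ (u : ℝ → ℝ), ContDiff ℝ (⊤ : ℕ∞) u →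
    (∀ t, iteratedDeriv j u t = 0) →
    ∃ P : Polynomial ℝ, P.degree < j ∧ ∀ t, u t = P.eval t := by
  induction j with
  | zero =>
    intro u _ h
    refine ⟨0, by simp, fun t => by simpa using h t⟩
  | succ j ih =>
    intro u hu h
    have hu' : ContDiff ℝ (⊤ : ℕ∞) (deriv u) := (contDiff_infty_iff_deriv.1 hu).2
    obtain ⟨p, hp, hpu⟩ := ih (deriv u) hu' (fun t => by rw [← iteratedDeriv_succ']; exact h t)
    exact poly_of_deriv_poly j u (hu.differentiable (by simp)) p hp hpu

lemma poly_lim (j : ℕ) (ρ : ℝ → ℝ) (q : ℕ → ℝ → ℝ)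
    (hq : ∀ i, ∃ P : Polynomial ℝ, P.degree < j ∧ ∀ t, q i t = P.eval t)
    (hl : ∀ t, Tendsto (fun i => q i t) atTop (𝓝 (ρ t))) :
    ∃ P : Polynomial ℝ, ∀ t, ρ t = P.eval t := by
  have key : ∀ i t, q i t = ∑ k ∈ Finset.range j, q i k * (Lagrange.basis (Finset.range j) (fun k : ℕ => (k:ℝ)) k).eval t := by
    intro i t
    obtain ⟨P, hP, hPq⟩ := hq i
    have := Lagrange.eq_interpolate (s := Finset.range j) (v := fun k : ℕ => (k:ℝ)) (f := P)
      (fun a _ b _ h => Nat.cast_injective h) (by simpa using hP)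
    rw [hPq, this, Lagrange.interpolate_apply, Polynomial.eval_finsetSum]
    refine Finset.sum_congr rfl fun k _ => ?_
    rw [Polynomial.eval_mul, Polynomial.eval_C, hPq]
  refine ⟨∑ k ∈ Finset.range j, Polynomial.C (ρ k) * (Lagrange.basis (Finset.range j) (fun k : ℕ => (k:ℝ)) k), fun t => ?_⟩
  refine tendsto_nhds_unique (hl t) ?_
  simp only [Polynomial.eval_finsetSum, Polynomial.eval_mul, Polynomial.eval_C]
  rw [show (fun i => q i t) = _ from funext fun i => key i t]
  exact tendsto_finsetSum _ fun k _ => Tendsto.mul_const _ (hl _)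

lemma integral_mem_closed {E X : Type*} [NormedAddCommGroup E] [NormedSpace ℝ E] [CompleteSpace E]
    [TopologicalSpace X] [MeasurableSpace X] [OpensMeasurableSpace X] [SecondCountableTopology X]
    (μ : Measure X) (N : Submodule ℝ E) (hN : IsClosed (N : Set E)) (c : X → E)
    (hc : Continuous c) (hi : Integrable c μ) (hm : ∀ t, c t ∈ N) : ∫ t, c t ∂μ ∈ N := by
  have : CompleteSpace N := hN.completeSpace_coe
  let d : X → N := fun t => ⟨c t, hm t⟩
  have hd : Continuous d := hc.subtype_mk _
  have hdi : Integrable d μ := 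
    hi.mono hd.aestronglyMeasurable (ae_of_all _ fun t => le_rfl)
  have := N.subtypeL.integral_comp_comm hdi
  simp only [Submodule.subtypeL_apply] at this
  show ∫ t, (d t : E) ∂μ ∈ N
  rw [this]
  exact (∫ t, d t ∂μ).2

lemma hasDerivAt_cmap {X : Type*} [TopologicalSpace X] [CompactSpace X] (c c' : ℝ → C(X, ℝ))
    (hc' : Continuous c') (h : ∀ x s, HasDerivAt (fun s => c s x) (c' s x) s) (s : ℝ) :
    HasDerivAt c (c' s) s := by
  have key : ∀ t, c t = c 0 + ∫ r in (0:ℝ)..t, c' r := by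
    intro t
    ext x
    have h1 : (∫ r in (0:ℝ)..t, c' r) x = ∫ r in (0:ℝ)..t, c' r x :=
      ((ContinuousMap.evalCLM ℝ x).intervalIntegral_comp_comm (hc'.intervalIntegrable _ _)).symm
    have hcx : Continuous fun r => c' r x := (ContinuousMap.evalCLM ℝ x).continuous.comp hc'
    rw [ContinuousMap.add_apply, h1, intervalIntegral.integral_eq_sub_of_hasDerivAt
      (fun r _ => h x r) (hcx.intervalIntegrable _ _)]
    ring
  rw [show c = _ from funext key]
  exact (intervalIntegral.integral_hasDerivAt_right (hc'.intervalIntegrable _ _)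
    (hc'.stronglyMeasurableAtFilter _ _) hc'.continuousAt).const_add _

lemma deriv_mem_closed {E : Type*} [NormedAddCommGroup E] [NormedSpace ℝ E]
    (N : Submodule ℝ E) (hN : IsClosed (N : Set E)) (c : ℝ → E) (c' : E) (s : ℝ)
    (h : HasDerivAt c c' s) (hm : ∀ t, c t ∈ N) : c' ∈ N := by
  have := hasDerivAt_iff_tendsto_slope.1 h
  refine hN.mem_of_tendsto this (Eventually.of_forall fun t => ?_)
  exact N.smul_mem _ (N.sub_mem (hm _) (hm _))

lemma smooth_mem (R : ℝ) (N : Submodule ℝ C(Icc (-R) R, ℝ)) (hN : IsClosed (N : Set C(Icc (-R) R, ℝ)))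
    (u : ℝ → ℝ) (hu : ContDiff ℝ (⊤ : ℕ∞) u) (b : ℝ)
    (h : ∀ (s : ℝ) (e : C(Icc (-R) R, ℝ)), (∀ x, e x = u (s * x + b)) → e ∈ N) (j : ℕ) :
    ∀ (s : ℝ) (e : C(Icc (-R) R, ℝ)), (∀ x, e x = iteratedDeriv j u (s * x + b) * (x:ℝ) ^ j) → e ∈ N := by
  induction j with
  | zero => intro s e he; exact h s e (by simpa using he)
  | succ j ih =>
    have hcont : ∀ j, Continuous (iteratedDeriv j u) := fun j =>
      hu.continuous_iteratedDeriv j (by exact_mod_cast le_top)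
    let c : ℕ → ℝ → C(Icc (-R) R, ℝ) := fun j s =>
      ⟨fun x => iteratedDeriv j u (s * x + b) * (x:ℝ) ^ j, by have := hcont j; fun_prop⟩
    have hc : ∀ j, Continuous (c j) := by
      intro j
      apply ContinuousMap.continuous_of_continuous_uncurry
      have := hcont j
      simp only [c, Function.uncurry_def, ContinuousMap.coe_mk]
      fun_prop
    intro s e he
    have : e = c (j+1) s := by ext x; exact he x
    rw [this]
    refine deriv_mem_closed N hN (c j) _ s (hasDerivAt_cmap (c j) (c (j+1)) (hc _) ?_ s) ?_
    · intro x s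
      have h1 : HasDerivAt (iteratedDeriv j u) (iteratedDeriv (j+1) u (s * x + b)) (s * x + b) := by
        rw [iteratedDeriv_succ]
        exact (hu.differentiable_iteratedDeriv j (by exact_mod_cast WithTop.coe_lt_top _) _).hasDerivAt
      have h2 : HasDerivAt (fun s : ℝ => s * (x:ℝ) + b) x s := by
        simpa using ((hasDerivAt_id s).mul_const (x:ℝ)).add_const b
      have h3 := (h1.comp s h2).mul_const ((x:ℝ)^j)
      refine HasDerivAt.congr_deriv h3 ?_
      change _ = iteratedDeriv (j+1) u (s * x + b) * (x:ℝ) ^ (j+1)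
      ring
    · intro t; exact ih t _ (fun x => rfl)

lemma leshno (ρ : ℝ → ℝ) (hρ : Continuous ρ)
    (hpoly : ¬ ∃ p : Polynomial ℝ, ∀ t : ℝ, ρ t = p.eval t) (R : ℝ) (f : C(Icc (-R) R, ℝ)) :
    f ∈ (Submodule.span ℝ {e : C(Icc (-R) R, ℝ) | ∃ s : ℝ, s ≠ 0 ∧ ∃ b : ℝ, ∀ x, e x = ρ (s * x + b)}).topologicalClosure := by
  set N := (Submodule.span ℝ {e : C(Icc (-R) R, ℝ) | ∃ s : ℝ, s ≠ 0 ∧ ∃ b : ℝ, ∀ x, e x = ρ (s * x + b)}).topologicalClosure with hNdef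
  have hN : IsClosed (N : Set C(Icc (-R) R, ℝ)) := Submodule.isClosed_topologicalClosure _
  let r : ℝ → ℝ → C(Icc (-R) R, ℝ) := fun s b => ⟨fun x => ρ (s * x + b), by fun_prop⟩
  have hr1 : ∀ b, Continuous (fun s => r s b) := by
    intro b
    apply ContinuousMap.continuous_of_continuous_uncurry
    simp only [r, Function.uncurry_def, ContinuousMap.coe_mk]
    fun_prop
  have hr2 : ∀ s b, Continuous (fun t => r s (b - t)) := by
    intro s b
    apply ContinuousMap.continuous_of_continuous_uncurry
    simp only [r, Function.uncurry_def, ContinuousMap.coe_mk]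
    fun_prop
  have hrN : ∀ s b, r s b ∈ N := by
    intro s b
    have hcl : IsClosed ((fun s => r s b) ⁻¹' (N : Set _)) := hN.preimage (hr1 b)
    have : ({0}ᶜ : Set ℝ) ⊆ ((fun s => r s b) ⁻¹' (N : Set _)) := by
      intro s hs
      exact Submodule.le_topologicalClosure _ (Submodule.subset_span ⟨s, hs, b, fun x => rfl⟩)
    have h2 := closure_minimal this hcl
    rw [(dense_compl_singleton (0:ℝ)).closure_eq] at h2
    exact h2 (mem_univ s)
  let m : ContDiffBump (0:ℝ) → ℝ → ℝ := fun φ =>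
    convolution (φ.normed volume) ρ (ContinuousLinearMap.lsmul ℝ ℝ) volume
  have hm : ∀ φ, ContDiff ℝ (⊤ : ℕ∞) (m φ) := fun φ =>
    φ.hasCompactSupport_normed.contDiff_convolution_left _ φ.contDiff_normed hρ.locallyIntegrable
  have hmN : ∀ φ b (s : ℝ) (e : C(Icc (-R) R, ℝ)), (∀ x, e x = m φ (s * x + b)) → e ∈ N := by
    intro φ b s e he
    have hcont : Continuous fun t => φ.normed volume t • r s (b - t) :=
      φ.continuous_normed.smul (hr2 s b)
    have hint : Integrable fun t => φ.normed volume t • r s (b - t) :=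
      hcont.integrable_of_hasCompactSupport (φ.hasCompactSupport_normed.smul_right)
    have : e = ∫ t, φ.normed volume t • r s (b - t) := by
      ext x
      rw [ContinuousMap.integral_apply hint, he]
      simp only [m, convolution_def, r, ContinuousMap.smul_apply, ContinuousMap.coe_mk, ContinuousLinearMap.lsmul_apply, add_sub_assoc]
    rw [this]
    exact integral_mem_closed _ N hN _ hcont hint (fun t => N.smul_mem _ (hrN _ _))
  have hmon : ∀ (j : ℕ) (e : C(Icc (-R) R, ℝ)), (∀ x, e x = (x:ℝ)^j) → e ∈ N := by
    intro j e he
    by_contra hcon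
    have hz : ∀ φ b, iteratedDeriv j (m φ) b = 0 := by
      intro φ b
      by_contra hne
      have h1 := smooth_mem R N hN (m φ) (hm φ) b (hmN φ b) j 0 (iteratedDeriv j (m φ) b • e)
        (by intro x; simp [he])
      apply hcon
      have := N.smul_mem (iteratedDeriv j (m φ) b)⁻¹ h1
      rwa [smul_smul, inv_mul_cancel₀ hne, one_smul] at this
    let ph : ℕ → ContDiffBump (0:ℝ) := fun i =>
      ⟨1/((i:ℝ)+1)/2, 1/((i:ℝ)+1), by positivity, half_lt_self (by positivity)⟩
    apply hpoly
    refine poly_lim j ρ (fun i => m (ph i)) (fun i => poly_of_iteratedDeriv j _ (hm _) (hz _)) ?_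
    intro t
    refine ContDiffBump.convolution_tendsto_right_of_continuous ?_ hρ t
    exact tendsto_one_div_add_atTop_nhds_zero_nat
  rw [← SetLike.mem_coe, ← hN.closure_eq, Metric.mem_closure_iff]
  intro ε hε
  obtain ⟨p, hp⟩ := exists_polynomial_near_continuousMap _ _ f ε hε
  refine ⟨p.toContinuousMapOn _, ?_, by rwa [dist_comm, dist_eq_norm]⟩
  clear hp
  induction p using Polynomial.induction_on' with
  | add p q hp hq =>
    have : (p + q).toContinuousMapOn (Icc (-R) R) = p.toContinuousMapOn _ + q.toContinuousMapOn _ := by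
      ext x; simp
    rw [this]
    exact N.add_mem hp hq
  | monomial k a =>
    have : (Polynomial.monomial k a).toContinuousMapOn (Icc (-R) R) =
        a • (Polynomial.X ^ k : Polynomial ℝ).toContinuousMapOn _ := by
      ext x; simp
    rw [this]
    exact N.smul_mem _ (hmon k _ (by intro x; simp))

section jets
variable {F : Type*} [NormedAddCommGroup F] [InnerProductSpace ℝ F]

def netSpan (F : Type*) [NormedAddCommGroup F] [InnerProductSpace ℝ F] (σ : ℝ → ℝ) :
    Submodule ℝ (F → ℝ) :=
  Submodule.span ℝ (Set.range fun (p : F × ℝ) => fun x : F => σ (inner ℝ p.1 x + p.2))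

def jetSpan (F : Type*) [NormedAddCommGroup F] [InnerProductSpace ℝ F] (σ : ℝ → ℝ) (R : ℝ) :
    Submodule ℝ C(Metric.closedBall (0 : F) R, ℝ × F) :=
  Submodule.span ℝ {e | ∃ (w : F) (b : ℝ), ∀ x,
    e x = (σ (inner ℝ w (x : F) + b), deriv σ (inner ℝ w (x : F) + b) • w)}

lemma jetSpan_fun (σ : ℝ → ℝ) (hσ : Differentiable ℝ σ) (R : ℝ)
    (e : C(Metric.closedBall (0 : F) R, ℝ × F)) (he : e ∈ jetSpan F σ R) :
    ∃ h ∈ netSpan F σ, ∃ g : F → F, (∀ x, HasFDerivAt h (innerSL ℝ (g x)) x) ∧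
      ∀ x, e x = (h x, g x) := by
  unfold jetSpan at he
  induction he using Submodule.span_induction with
  | mem e he =>
    obtain ⟨w, b, hw⟩ := he
    refine ⟨fun x => σ (inner ℝ w x + b), Submodule.subset_span ⟨(w, b), rfl⟩,
      fun x => deriv σ (inner ℝ w x + b) • w, fun x => ?_, hw⟩
    have h1 : HasFDerivAt (fun x : F => inner ℝ w x + b) (innerSL ℝ w) x :=
      ((innerSL ℝ w).hasFDerivAt).add_const b
    have h2 := ((hσ (inner ℝ w x + b)).hasDerivAt).comp_hasFDerivAt x h1
    rw [map_smul]
    exact h2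
  | zero => exact ⟨0, Submodule.zero_mem _, 0, fun x => by
      rw [Pi.zero_apply, map_zero]; exact hasFDerivAt_const (0:ℝ) x, fun x => rfl⟩
  | add e e' _ _ h1 h2 =>
    obtain ⟨h, hh, g, hg, he⟩ := h1
    obtain ⟨h', hh', g', hg', he'⟩ := h2
    refine ⟨h + h', Submodule.add_mem _ hh hh', g + g', fun x => ?_, fun x => ?_⟩
    · rw [Pi.add_apply, map_add]; exact (hg x).add (hg' x)
    · simp [he, he']
  | smul a e _ h1 =>
    obtain ⟨h, hh, g, hg, he⟩ := h1
    refine ⟨a • h, Submodule.smul_mem _ _ hh, a • g, fun x => ?_, fun x => ?_⟩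
    · rw [Pi.smul_apply, map_smul]; exact (hg x).const_smul a
    · simp [he]

lemma jet_const (σ : ℝ → ℝ) (h0 : ∃ b, σ b ≠ 0) (R d : ℝ)
    (e : C(Metric.closedBall (0 : F) R, ℝ × F)) (he : ∀ x, e x = (d, 0)) : e ∈ jetSpan F σ R := by
  obtain ⟨b, hb⟩ := h0
  have : (σ b / d) • e ∈ jetSpan F σ R ∨ d = 0 := by
    by_cases hd : d = 0
    · exact Or.inr hd
    · left
      refine Submodule.subset_span ⟨0, b, fun x => ?_⟩
      simp [he, hd]
  by_cases hd : d = 0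
  · have : e = 0 := by ext x <;> simp [he, hd]
    rw [this]; exact Submodule.zero_mem _
  · have h1 := Submodule.smul_mem _ (σ b / d)⁻¹ (this.resolve_right hd)
    rwa [smul_smul, inv_mul_cancel₀ (by positivity), one_smul] at h1

variable [FiniteDimensional ℝ F]

instance (R : ℝ) : CompactSpace (Metric.closedBall (0 : F) R) :=
  have := FiniteDimensional.proper_real F
  isCompact_iff_compactSpace.1 (isCompact_closedBall _ _)

lemma jet_lip (σ : ℝ → ℝ) (hσ : Differentiable ℝ σ) (R : ℝ)
    (e : C(Metric.closedBall (0 : F) R, ℝ × F)) (he : e ∈ (jetSpan F σ R).topologicalClosure)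
    (x y : Metric.closedBall (0 : F) R) :
    |(e x).1 - (e y).1| ≤ ‖e‖ * ‖(x : F) - y‖ := by
  have hcl : IsClosed {e : C(Metric.closedBall (0 : F) R, ℝ × F) |
      |(e x).1 - (e y).1| ≤ ‖e‖ * ‖(x : F) - y‖} := by
    apply isClosed_le
    · fun_prop
    · fun_prop
  refine closure_minimal ?_ hcl he
  intro e he
  obtain ⟨h, -, g, hg, hex⟩ := jetSpan_fun σ hσ R e he
  simp only [mem_ofPred_eq, hex]
  have := (convex_closedBall (0:F) R).norm_image_sub_le_of_norm_hasFDerivWithin_le (f := h) (C := ‖e‖)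
    (fun z _ => (hg z).hasFDerivWithinAt) (fun z hz => ?_) y.2 x.2
  · exact this
  · rw [innerSL_apply_norm]
    have h1 := e.norm_coe_le_norm ⟨z, hz⟩
    rw [hex] at h1
    exact (norm_snd_le _).trans h1

lemma jet_ridge (σ : ℝ → ℝ) (hσ : ContDiff ℝ 1 σ)
    (hσpoly : ¬ ∃ p : Polynomial ℝ, ∀ t : ℝ, σ t = p.eval t) (R : ℝ) (u u' : ℝ → ℝ)
    (hu : ∀ t, HasDerivAt u (u' t) t) (hu' : Continuous u') (v : F)
    (e : C(Metric.closedBall (0 : F) R, ℝ × F))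
    (he : ∀ x, e x = (u (inner ℝ v (x:F)), u' (inner ℝ v (x:F)) • v)) :
    e ∈ (jetSpan F σ R).topologicalClosure := by
  have hdσ : Differentiable ℝ σ := hσ.differentiable (by simp)
  have hρ : Continuous (deriv σ) := hσ.continuous_deriv (by simp)
  have hρp : ¬ ∃ p : Polynomial ℝ, ∀ t : ℝ, deriv σ t = p.eval t := by
    rintro ⟨p, hp⟩
    obtain ⟨P, -, hP⟩ := poly_of_deriv_poly (p.natDegree + 1) σ hdσ p
      (lt_of_le_of_lt Polynomial.degree_le_natDegree (by exact_mod_cast Nat.lt_succ_self _)) hp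
    exact hσpoly ⟨P, hP⟩
  have h0 : ∃ b, σ b ≠ 0 := by
    by_contra! h
    exact hσpoly ⟨0, by simpa using h⟩
  set S := ‖v‖ * |R| with hS
  have hS0 : 0 ≤ S := by positivity
  have hxS : ∀ x : Metric.closedBall (0 : F) R, inner ℝ v (x:F) ∈ Icc (-S) S := by
    intro x
    rw [mem_Icc, ← abs_le]
    refine (abs_real_inner_le_norm _ _).trans ?_
    have : ‖(x:F)‖ ≤ R := mem_closedBall_zero_iff.1 x.2
    exact mul_le_mul_of_nonneg_left (this.trans (le_abs_self R)) (norm_nonneg _)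
  let q : C(Icc (-S) S, ℝ) := ⟨fun t => u' t, by fun_prop⟩
  have hq := leshno (deriv σ) hρ hρp S q
  rw [← SetLike.mem_coe, Submodule.topologicalClosure_coe, Metric.mem_closure_iff] at hq ⊢
  intro ε hε
  have hpos : 0 < S + ‖v‖ + 1 := by positivity
  obtain ⟨q', hq', hqq⟩ := hq (ε / (S + ‖v‖ + 1)) (by positivity)
  set δ := ε / (S + ‖v‖ + 1) with hδ
  have hspan : ∃ ψ ψ' : ℝ → ℝ, (∀ t, HasDerivAt ψ (ψ' t) t) ∧ (∀ t : Icc (-S) S, q' t = ψ' t) ∧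
      ∃ e1 ∈ jetSpan F σ R, ∀ x, e1 x = (ψ (inner ℝ v (x:F)), ψ' (inner ℝ v (x:F)) • v) := by
    rw [SetLike.mem_coe] at hq'
    clear hqq
    induction hq' using Submodule.span_induction with
    | mem q hq =>
      obtain ⟨s, hs, b, hsb⟩ := hq
      refine ⟨fun t => s⁻¹ * σ (s * t + b), fun t => deriv σ (s * t + b), fun t => ?_, hsb,
        s⁻¹ • ⟨fun x => (σ (inner ℝ (s • v) (x : F) + b), deriv σ (inner ℝ (s • v) (x : F) + b) • (s • v)), ?_⟩, ?_, ?_⟩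
      · have h2 : HasDerivAt (fun t : ℝ => s * t + b) s t := by
          simpa using ((hasDerivAt_id t).const_mul s).add_const b
        refine HasDerivAt.congr_deriv (((hdσ (s * t + b)).hasDerivAt.comp t h2).const_mul s⁻¹) ?_
        field_simp
      · exact Submodule.smul_mem _ _ (Submodule.subset_span ⟨s • v, b, fun x => rfl⟩)
      · intro x
        simp only [ContinuousMap.smul_apply, ContinuousMap.coe_mk, Prod.smul_mk, smul_smul, real_inner_smul_left, smul_eq_mul]
        congr 2
        field_simp
      · have := hσ.continuous
        fun_prop
    | zero => exact ⟨0, 0, fun t => hasDerivAt_const t (0:ℝ), fun t => rfl, 0, Submodule.zero_mem _, fun x => by simp; rfl⟩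
    | add q1 q2 _ _ h1 h2 =>
      obtain ⟨ψ, ψ', hψ, hq, e1, he1, hx⟩ := h1
      obtain ⟨ψ2, ψ2', hψ2, hq2, e2, he2, hx2⟩ := h2
      refine ⟨ψ + ψ2, ψ' + ψ2', fun t => (hψ t).add (hψ2 t), fun t => by simp [hq, hq2], e1 + e2,
        Submodule.add_mem _ he1 he2, fun x => by simp [hx, hx2, add_smul]⟩
    | smul a q1 _ h1 =>
      obtain ⟨ψ, ψ', hψ, hq, e1, he1, hx⟩ := h1
      refine ⟨a • ψ, a • ψ', fun t => (hψ t).const_smul a, fun t => by simp [hq], a • e1,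
        Submodule.smul_mem _ _ he1, fun x => by simp [hx, smul_smul]⟩
  obtain ⟨ψ, ψ', hψ, hqψ, e1, he1, hx1⟩ := hspan
  let e2 : C(Metric.closedBall (0 : F) R, ℝ × F) := ContinuousMap.const _ (u 0 - ψ 0, 0)
  refine ⟨e1 + e2, Submodule.add_mem _ he1 (jet_const σ h0 R (u 0 - ψ 0) e2 fun x => rfl), ?_⟩
  have hδ0 : 0 < δ := by positivity
  have hd : ∀ t ∈ Icc (-S) S, |u' t - ψ' t| ≤ δ := by
    intro t ht
    have h1 := ContinuousMap.dist_apply_le_dist (f := q) (g := q') ⟨t, ht⟩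
    rw [hqψ, Real.dist_eq] at h1
    exact h1.trans hqq.le
  have hv : ∀ t ∈ Icc (-S) S, |u t - ψ t - (u 0 - ψ 0)| ≤ δ * S := by
    intro t ht
    have h1 := (convex_Icc (-S) S).norm_image_sub_le_of_norm_hasDerivWithin_le (f := fun t => u t - ψ t)
      (f' := fun t => u' t - ψ' t) (C := δ)
      (fun z _ => ((hu z).sub (hψ z)).hasDerivWithinAt) (fun z hz => hd z hz)
      (x := 0) (y := t) ⟨by linarith, hS0⟩ ht
    refine h1.trans ?_
    rw [sub_zero]
    exact mul_le_mul_of_nonneg_left (abs_le.2 ht) hδ0.le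
  have hfin : δ * (S + ‖v‖) < ε := by
    rw [hδ, div_mul_eq_mul_div, div_lt_iff₀ hpos]
    nlinarith
  refine lt_of_le_of_lt ?_ hfin
  rw [dist_eq_norm, ContinuousMap.norm_le _ (by positivity)]
  intro x
  simp only [ContinuousMap.sub_apply, ContinuousMap.add_apply, he, hx1, e2, ContinuousMap.const_apply]
  rw [Prod.norm_def]
  refine max_le ?_ ?_
  · simp only [Prod.fst_sub, Prod.fst_add]
    have := hv _ (hxS x)
    rw [Real.norm_eq_abs, ← sub_sub] 
    refine this.trans ?_
    nlinarith [norm_nonneg v]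
  · simp only [Prod.snd_sub, Prod.snd_add, add_zero, ← sub_smul, norm_smul]
    have := hd _ (hxS x)
    rw [Real.norm_eq_abs]
    nlinarith [norm_nonneg v, mul_le_mul_of_nonneg_right this (norm_nonneg v)]

end jets

section fourier
variable {F : Type*} [NormedAddCommGroup F] [InnerProductSpace ℝ F] [FiniteDimensional ℝ F]
  [MeasurableSpace F] [BorelSpace F]

open scoped SchwartzMap FourierTransform in
lemma jet_schwartz (σ : ℝ → ℝ) (hσ : ContDiff ℝ 1 σ)
    (hσpoly : ¬ ∃ p : Polynomial ℝ, ∀ t : ℝ, σ t = p.eval t) (R : ℝ) (H : 𝓢(F, ℂ)) :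
    ∃ e ∈ (jetSpan F σ R).topologicalClosure, ∀ x, (e x).1 = (H x).re := by
  set G : 𝓢(F, ℂ) := 𝓕⁻ H with hG
  have hHG : 𝓕 G = H := FourierTransform.fourier_fourierInv_eq H
  have hGc : Continuous G := G.continuous
  let U : F → ℝ → ℝ := fun v t => (G v).re * Real.cos (2 * Real.pi * t) + (G v).im * Real.sin (2 * Real.pi * t)
  let U' : F → ℝ → ℝ := fun v t => (2 * Real.pi) * (-(G v).re * Real.sin (2 * Real.pi * t) + (G v).im * Real.cos (2 * Real.pi * t))
  have hU : ∀ v t, HasDerivAt (U v) (U' v t) t := by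
    intro v t
    have h1 : HasDerivAt (fun t : ℝ => 2 * Real.pi * t) (2 * Real.pi) t := by
      simpa using (hasDerivAt_id t).const_mul (2 * Real.pi)
    refine HasDerivAt.congr_deriv ((h1.cos.const_mul (G v).re).add (h1.sin.const_mul (G v).im)) ?_
    simp only [U']; ring
  let c : F → C(Metric.closedBall (0 : F) R, ℝ × F) := fun v =>
    ⟨fun x => (U v (inner ℝ v (x:F)), U' v (inner ℝ v (x:F)) • v), by
      simp only [U, U']; fun_prop⟩
  have hc : Continuous c := by
    apply ContinuousMap.continuous_of_continuous_uncurry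
    simp only [c, Function.uncurry_def, ContinuousMap.coe_mk, U, U']
    fun_prop
  have hcN : ∀ v, c v ∈ (jetSpan F σ R).topologicalClosure := fun v =>
    jet_ridge σ hσ hσpoly R (U v) (U' v) (hU v) (by simp only [U']; fun_prop) v (c v) fun x => rfl
  have hb : ∀ a b θ : ℝ, ∀ z : ℂ, |a| ≤ ‖z‖ → |b| ≤ ‖z‖ → |a * Real.cos θ + b * Real.sin θ| ≤ 2 * ‖z‖ := by
    intro a b θ z ha hb
    refine (abs_add_le _ _).trans ?_
    rw [abs_mul, abs_mul]
    nlinarith [Real.abs_cos_le_one θ, Real.abs_sin_le_one θ, abs_nonneg a, abs_nonneg b, abs_nonneg (Real.cos θ), abs_nonneg (Real.sin θ)]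
  have hint : Integrable c := by
    have hg : Integrable fun v => 2 * (‖v‖ ^ 0 * ‖G v‖) + 4 * Real.pi * (‖v‖ ^ 1 * ‖G v‖) :=
      ((G.integrable_pow_mul volume 0).const_mul _).add ((G.integrable_pow_mul volume 1).const_mul _)
    refine hg.mono' hc.aestronglyMeasurable (ae_of_all _ fun v => ?_)
    have hp := Real.pi_pos
    rw [ContinuousMap.norm_le _ (by positivity)]
    intro x
    have e1 : |U v (inner ℝ v (x:F))| ≤ 2 * ‖G v‖ :=
      hb _ _ _ _ (Complex.abs_re_le_norm _) (Complex.abs_im_le_norm _)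
    have e2 : |U' v (inner ℝ v (x:F))| ≤ 2 * Real.pi * (2 * ‖G v‖) := by
      simp only [U']
      rw [abs_mul, abs_of_pos (by positivity), add_comm]
      refine mul_le_mul_of_nonneg_left ?_ (by positivity)
      exact hb _ _ _ _ (Complex.abs_im_le_norm _) (by rw [abs_neg]; exact Complex.abs_re_le_norm _)
    change ‖(U v (inner ℝ v (x:F)), U' v (inner ℝ v (x:F)) • v)‖ ≤ _
    rw [Prod.norm_def]
    have e3 : 0 ≤ Real.pi * (‖v‖ * ‖G v‖) := by positivity
    refine max_le ?_ ?_
    · simp only [Real.norm_eq_abs]; simp only [pow_zero, pow_one]; linarith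
    · simp only [norm_smul, Real.norm_eq_abs, pow_zero, pow_one]
      have := mul_le_mul_of_nonneg_right e2 (norm_nonneg v)
      linarith [norm_nonneg (G v)]
  refine ⟨∫ v, c v, integral_mem_closed _ _ (Submodule.isClosed_topologicalClosure _) c hc hint hcN, ?_⟩
  intro x
  rw [ContinuousMap.integral_apply hint]
  have hint' : Integrable fun v => c v x := (ContinuousMap.evalCLM ℝ x).integrable_comp hint
  rw [fst_integral hint', ← hHG, SchwartzMap.fourier_coe, Real.fourier_eq']
  have hi2 : Integrable fun v : F => Complex.exp ((↑(-2 * Real.pi * inner ℝ v (x:F)) * Complex.I)) • G v := by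
    refine G.integrable.mono (by apply Continuous.aestronglyMeasurable; fun_prop) (ae_of_all _ fun v => ?_)
    rw [norm_smul, Complex.norm_exp_ofReal_mul_I, one_mul]
  change _ = Complex.reCLM _
  rw [← Complex.reCLM.integral_comp_comm hi2]
  congr 1
  ext v
  rw [Complex.exp_mul_I, ← Complex.ofReal_cos, ← Complex.ofReal_sin]
  change U v (inner ℝ v (x:F)) = Complex.re _
  simp only [U, smul_eq_mul, Complex.mul_re, Complex.add_re, Complex.add_im, Complex.ofReal_re, Complex.ofReal_im, Complex.I_re, Complex.I_im, Complex.mul_im]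
  rw [show -2 * Real.pi * inner ℝ v (x:F) = -(2 * Real.pi * inner ℝ v (x:F)) by ring, Real.cos_neg, Real.sin_neg]
  ring

lemma approx_smooth (σ : ℝ → ℝ) (hσ : ContDiff ℝ 1 σ)
    (hσpoly : ¬ ∃ p : Polynomial ℝ, ∀ t : ℝ, σ t = p.eval t) (R : ℝ) (g : F → ℝ)
    (hg : ContDiff ℝ (⊤ : ℕ∞) g) (δ : ℝ) (hδ : 0 < δ) :
    ∃ h ∈ netSpan F σ, ∀ x ∈ Metric.closedBall (0:F) R,
      |g x - h x| ≤ δ ∧ ∀ y ∈ Metric.closedBall (0:F) R,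
        |(g x - h x) - (g y - h y)| ≤ δ * ‖x - y‖ := by
  let χ : ContDiffBump (0:F) := ⟨|R| + 1, |R| + 2, by positivity, by linarith⟩
  let H0 : F → ℂ := fun x => ((χ x * g x : ℝ) : ℂ)
  have hH0 : ContDiff ℝ (⊤ : ℕ∞) H0 := Complex.ofRealCLM.contDiff.comp (χ.contDiff.mul hg)
  have hH1 : HasCompactSupport H0 := by
    refine (χ.hasCompactSupport.mul_right (f' := g)).comp_left (g := fun r : ℝ => (r : ℂ)) (by simp)
  obtain ⟨e, heN, he⟩ := jet_schwartz σ hσ hσpoly R (hH1.toSchwartzMap hH0)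
  have heg : ∀ x, (e x).1 = g x := by
    intro x
    rw [he]
    change (H0 x).re = _
    have : χ (x:F) = 1 := χ.one_of_mem_closedBall (by
      have := mem_closedBall_zero_iff.1 x.2
      rw [mem_closedBall_zero_iff]
      change _ ≤ |R| + 1
      linarith [le_abs_self R])
    simp [H0, this]
  have hdσ : Differentiable ℝ σ := hσ.differentiable (by simp)
  have heN' := heN
  rw [← SetLike.mem_coe, Submodule.topologicalClosure_coe, Metric.mem_closure_iff] at heN'
  obtain ⟨e', he', hd⟩ := heN' δ hδ
  obtain ⟨h, hh, g', -, hhe⟩ := jetSpan_fun σ hdσ R e' he'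
  rw [dist_eq_norm] at hd
  have hlip := jet_lip σ hdσ R (e - e') (Submodule.sub_mem _ heN (Submodule.le_topologicalClosure _ he'))
  refine ⟨h, hh, fun x hx => ⟨?_, fun y hy => ?_⟩⟩
  · have := ((norm_fst_le _).trans ((e - e').norm_coe_le_norm ⟨x, hx⟩)).trans hd.le
    simpa [heg, hhe] using this
  · have := (hlip ⟨x, hx⟩ ⟨y, hy⟩).trans (mul_le_mul_of_nonneg_right hd.le (norm_nonneg _))
    simpa [heg, hhe] using this
end fourier

lemma mollify (n : ℕ) (g : (Fin n → ℝ) → ℝ) (L : NNReal) (hg : LipschitzWith L g) (δ : ℝ) (hδ : 0 < δ) :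
    ∃ m : (Fin n → ℝ) → ℝ, ContDiff ℝ (⊤ : ℕ∞) m ∧ (∀ x, |m x - g x| ≤ δ) ∧
      ∀ x y, |m x - m y| ≤ L * ‖x - y‖ := by
  have hL : 0 < (L:ℝ) + 1 := by positivity
  let φ : ContDiffBump (0 : Fin n → ℝ) := ⟨δ / (L + 1) / 2, δ / (L + 1), by positivity, half_lt_self (by positivity)⟩
  have hgc := hg.continuous
  refine ⟨convolution (φ.normed volume) g (ContinuousLinearMap.lsmul ℝ ℝ) volume,
    φ.hasCompactSupport_normed.contDiff_convolution_left _ φ.contDiff_normed hgc.locallyIntegrable, ?_, ?_⟩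
  · intro x
    refine φ.dist_normed_convolution_le hgc.aestronglyMeasurable fun y hy => ?_
    refine (hg.dist_le_mul y x).trans ?_
    have h1 : dist y x < δ / (L + 1) := hy
    have h2 : (L:ℝ) * (δ / (L+1)) ≤ δ := by
      rw [← mul_div_assoc, div_le_iff₀ hL]; nlinarith [L.coe_nonneg]
    exact (mul_le_mul_of_nonneg_left h1.le L.coe_nonneg).trans h2
  · intro x y
    simp only [convolution_def, ContinuousLinearMap.lsmul_apply]
    have hi : ∀ x : Fin n → ℝ, Integrable fun t => φ.normed volume t • g (x - t) := fun x =>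
      (φ.continuous_normed.smul (hgc.comp (by fun_prop))).integrable_of_hasCompactSupport
        φ.hasCompactSupport_normed.smul_right
    rw [← integral_sub (hi x) (hi y)]
    have hφ : Integrable fun t => φ.normed volume t * (L * ‖x - y‖) := φ.integrable_normed.mul_const _
    rw [← Real.norm_eq_abs]
    refine (norm_integral_le_of_norm_le hφ (ae_of_all _ fun t => ?_)).trans ?_
    · rw [← smul_sub, norm_smul, Real.norm_of_nonneg (φ.nonneg_normed t)]
      refine mul_le_mul_of_nonneg_left ?_ (φ.nonneg_normed t)
      have := hg.dist_le_mul (x - t) (y - t)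
      rwa [dist_sub_right, dist_eq_norm, dist_eq_norm] at this
    · rw [integral_mul_const, φ.integral_normed, one_mul]

lemma scalar_approx (n : ℕ) (K : Set (Fin n → ℝ)) (hK : IsCompact K)
    (σ : ℝ → ℝ) (hσ : ContDiff ℝ 1 σ)
    (hσpoly : ¬ ∃ p : Polynomial ℝ, ∀ t : ℝ, σ t = p.eval t)
    (f : (Fin n → ℝ) → ℝ) (L : NNReal)
    (hf : LipschitzOnWith L f K) (ε : ℝ) (hε : 0 < ε) :
    ∃ h ∈ netSpan (EuclideanSpace ℝ (Fin n)) σ, (∀ x ∈ K, |f x - h (WithLp.toLp 2 x)| < ε) ∧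
      ∀ x ∈ K, ∀ y ∈ K, |h (WithLp.toLp 2 x) - h (WithLp.toLp 2 y)| ≤ (L + ε) * ‖x - y‖ := by
  obtain ⟨g, hg, hfg⟩ := hf.extend_real
  obtain ⟨m, hm, hmg, hml⟩ := mollify n g L hg (ε/2) (by positivity)
  let T := (PiLp.continuousLinearEquiv 2 ℝ (fun _ : Fin n => ℝ)).symm
  let T' := (PiLp.continuousLinearEquiv 2 ℝ (fun _ : Fin n => ℝ))
  have hT : ∀ x, T x = WithLp.toLp 2 x := fun x => rfl
  obtain ⟨M, hM0, hM⟩ := (T : (Fin n → ℝ) →L[ℝ] EuclideanSpace ℝ (Fin n)).bound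
  obtain ⟨R, hR⟩ := (hK.image T.continuous).isBounded.subset_closedBall 0
  obtain ⟨h, hh, happ⟩ := approx_smooth (F := EuclideanSpace ℝ (Fin n)) σ hσ hσpoly R (fun z => m (T' z))
    (hm.comp T'.contDiff) (ε / 2 / (M + 1)) (by positivity)
  have hd : ε / 2 / (M + 1) ≤ ε / 2 := div_le_self (by positivity) (by linarith)
  have hd2 : ε / 2 / (M + 1) * M ≤ ε := by
    rw [div_mul_eq_mul_div, div_le_iff₀ (by positivity)]; nlinarith
  have hKR : ∀ x ∈ K, WithLp.toLp 2 x ∈ Metric.closedBall (0 : EuclideanSpace ℝ (Fin n)) R := fun x hx =>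
    hR ⟨x, hx, rfl⟩
  have happ' : ∀ x ∈ K, |m x - h (WithLp.toLp 2 x)| ≤ ε / 2 / (M + 1) := fun x hx => (happ _ (hKR x hx)).1
  have hl' : ∀ x ∈ K, ∀ y ∈ K, |(m x - h (WithLp.toLp 2 x)) - (m y - h (WithLp.toLp 2 y))| ≤ ε * ‖x - y‖ := by
    intro x hx y hy
    refine ((happ _ (hKR x hx)).2 _ (hKR y hy)).trans ?_
    have h1 : ‖(WithLp.toLp 2 x : EuclideanSpace ℝ (Fin n)) - WithLp.toLp 2 y‖ ≤ M * ‖x - y‖ := hM (x - y)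
    calc _ ≤ ε / 2 / (M + 1) * (M * ‖x - y‖) := mul_le_mul_of_nonneg_left h1 (by positivity)
      _ = ε / 2 / (M + 1) * M * ‖x - y‖ := by ring
      _ ≤ _ := mul_le_mul_of_nonneg_right hd2 (norm_nonneg _)
  refine ⟨h, hh, fun x hx => ?_, fun x hx y hy => ?_⟩
  · have h1 := happ' x hx
    have h2 := hmg x
    have h3 : ε / 2 / (M + 1) < ε / 2 := div_lt_self (by positivity) (by linarith)
    rw [hfg hx]
    rw [abs_le] at h1 h2
    rw [abs_lt]
    constructor <;> linarith
  · have h1 := hl' x hx y hy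
    have h2 := hml x y
    rw [abs_le] at h1 h2 ⊢
    constructor <;> linarith

lemma assemble (n m : ℕ) (σ : ℝ → ℝ) (h : Fin m → EuclideanSpace ℝ (Fin n) → ℝ)
    (hh : ∀ i, h i ∈ netSpan (EuclideanSpace ℝ (Fin n)) σ) :
    ∃ (k : ℕ) (A : Matrix (Fin k) (Fin n) ℝ) (b : Fin k → ℝ) (C : Matrix (Fin m) (Fin k) ℝ),
      ∀ x j, C.mulVec (fun i => σ ((A.mulVec x + b) i)) j = h j (WithLp.toLp 2 x) := by
  classical
  choose c hc using fun i => (Finsupp.mem_span_range_iff_exists_finsupp.1 (hh i))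
  let S : Finset (EuclideanSpace ℝ (Fin n) × ℝ) := Finset.univ.biUnion fun i => (c i).support
  let q := S.equivFin.symm
  refine ⟨S.card, fun i j => (q i).1.1 j, fun i => (q i).1.2, fun j i => c j (q i).1, fun x j => ?_⟩
  have h1 : h j (WithLp.toLp 2 x) = ∑ p ∈ S, c j p * σ (inner ℝ p.1 (WithLp.toLp 2 x) + p.2) := by
    rw [← hc j, Finsupp.sum_of_support_subset (s := S) _ (Finset.subset_biUnion_of_mem (fun i => (c i).support) (Finset.mem_univ j)) _ (by simp)]
    simp
  rw [h1, ← Finset.sum_coe_sort S, ← q.sum_comp]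
  unfold Matrix.mulVec dotProduct
  refine Finset.sum_congr rfl fun i _ => ?_
  have h2 : inner ℝ (q i).1.1 (WithLp.toLp 2 x) = ∑ l, (q i).1.1 l * x l := by
    rw [PiLp.inner_apply]
    refine Finset.sum_congr rfl fun l _ => ?_
    exact mul_comm _ _
  rw [h2]
  rfl

theorem stmt_0 (n m : ℕ) (K : Set (Fin n → ℝ)) (hK : IsCompact K)
    (σ : ℝ → ℝ) (hσ : ContDiff ℝ 1 σ)
    (hσpoly : ¬ ∃ p : Polynomial ℝ, ∀ t : ℝ, σ t = p.eval t)
    (f : (Fin n → ℝ) → (Fin m → ℝ)) (L : ℝ)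
    (hf : ∀ x ∈ K, ∀ y ∈ K, ‖f x - f y‖ ≤ L * ‖x - y‖)
    (ε : ℝ) (hε : 0 < ε) :
    ∃ (k : ℕ) (A : Matrix (Fin k) (Fin n) ℝ) (b : Fin k → ℝ) (C : Matrix (Fin m) (Fin k) ℝ),
      (∀ x ∈ K, ‖f x - C.mulVec (fun i => σ ((A.mulVec x + b) i))‖ < ε) ∧
      (∀ x ∈ K, ∀ y ∈ K,
        ‖C.mulVec (fun i => σ ((A.mulVec x + b) i)) -
            C.mulVec (fun i => σ ((A.mulVec y + b) i))‖ ≤ (L + ε) * ‖x - y‖) := by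
  have hlip : ∀ j, LipschitzOnWith L.toNNReal (fun x => f x j) K := by
    intro j
    refine LipschitzOnWith.of_dist_le_mul fun x hx y hy => ?_
    rw [dist_eq_norm, dist_eq_norm]
    refine (norm_le_pi_norm (f x - f y) j).trans ((hf x hx y hy).trans ?_)
    exact mul_le_mul_of_nonneg_right (Real.le_coe_toNNReal L) (norm_nonneg _)
  choose h hh h1 h2 using fun j => scalar_approx n K hK σ hσ hσpoly (fun x => f x j) L.toNNReal (hlip j) ε hε
  obtain ⟨k, A, b, C, hC⟩ := assemble n m σ h hh
  refine ⟨k, A, b, C, fun x hx => ?_, fun x hx y hy => ?_⟩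
  · rw [pi_norm_lt_iff hε]
    intro j
    rw [Pi.sub_apply, hC]
    exact h1 j x hx
  · by_cases hxy : x = y
    · simp [hxy]
    have hpos : 0 < ‖x - y‖ := norm_pos_iff.2 (sub_ne_zero.2 hxy)
    have hL : 0 ≤ L := by
      by_contra! hneg
      have := hf x hx y hy
      nlinarith [norm_nonneg (f x - f y), mul_pos_of_neg_of_neg hneg (neg_lt_zero.2 hpos)]
    rw [pi_norm_le_iff_of_nonneg (by positivity)]
    intro j
    rw [Pi.sub_apply, hC, hC]
    have := h2 j x hx y hy
    rwa [Real.coe_toNNReal L hL] at this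
end

section
/- Let K ⊆ ℝⁿ be a compact set and let σ : ℝ → ℝ be continuously differentiable and not a polynomial. Suppose f : K → ℝ^m satisfies ‖f(x) − f(y)‖_∞ ≤ L‖x − y‖_2 for all x, y ∈ K. Then for every ε > 0 there exist k ∈ ℕ, matrices A ∈ ℝ^{k×n}, C ∈ ℝ^{m×k} and a vector b ∈ ℝ^k such that the one-hidden-layer neural network φ(x) = C·σ(Ax + b) satisfies sup_{x ∈ K} ‖f(x) − φ(x)‖_∞ < ε and ‖φ(x) − φ(y)‖_∞ ≤ (L + ε(√(n + n/ε)/2 + L))·‖x − y‖_2 for all x, y ∈ K. -/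
open MeasureTheory Set Filter Topology Metric

namespace NNApprox

variable {V : Type*} [NormedAddCommGroup V] [InnerProductSpace ℝ V]

/-- pair (value, gradient) of a ridge function on a ball -/
noncomputable def ridge (R : ℝ) (u v : C(ℝ, ℝ)) (a : V) (b : ℝ) :
    C(closedBall (0 : V) R, ℝ × V) :=
  ⟨fun x => (u (inner ℝ a (x : V) + b), v (inner ℝ a (x : V) + b) • a), by fun_prop⟩

lemma integral_mem' {E : Type*} [NormedAddCommGroup E] [NormedSpace ℝ E] [CompleteSpace E]
    (S : Submodule ℝ E) (hS : IsClosed (S : Set E)) {Y : Type*} [TopologicalSpace Y]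
    [MeasurableSpace Y] [BorelSpace Y] [SecondCountableTopology Y]
    (μ : Measure Y) (G : Y → E) (hG : Continuous G) (hm : ∀ y, G y ∈ S) (hi : Integrable G μ) :
    ∫ y, G y ∂μ ∈ S := by
  have : CompleteSpace S := hS.completeSpace_coe
  let G' : Y → S := fun y => ⟨G y, hm y⟩
  have hG' : Continuous G' := hG.subtype_mk _
  have hi' : Integrable G' μ := by
    refine Integrable.mono' hi.norm ?_ ?_
    · exact hG'.aestronglyMeasurable
    · exact Eventually.of_forall fun y => le_rfl
  have := S.subtypeL.integral_comp_comm hi'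
  have h2 : ∫ y, G y ∂μ = S.subtypeL (∫ y, G' y ∂μ) := this
  rw [h2]
  exact (∫ y, G' y ∂μ).2

lemma curve_deriv_mem {X W : Type*} [TopologicalSpace X] [CompactSpace X] [NormedAddCommGroup W]
    [NormedSpace ℝ W] [CompleteSpace W] (S : Submodule ℝ C(X, W)) (hS : IsClosed (S : Set C(X, W)))
    (H H' : ℝ → C(X, W)) (hc : Continuous H')
    (hd : ∀ s x, HasDerivAt (fun r => H r x) (H' s x) s) (hm : ∀ s, H s ∈ S) (s : ℝ) :
    H' s ∈ S := by
  have key : ∀ r, H r = H 0 + ∫ q in (0:ℝ)..r, H' q := by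
    intro r
    ext x
    have h1 := (ContinuousMap.evalCLM ℝ x : C(X, W) →L[ℝ] W).intervalIntegral_comp_comm
      (hc.intervalIntegrable (μ := volume) 0 r)
    have h2 := intervalIntegral.integral_eq_sub_of_hasDerivAt (a := 0) (b := r)
      (fun q _ => hd q x) (((ContinuousMap.evalCLM ℝ x : C(X, W) →L[ℝ] W).continuous.comp hc).intervalIntegrable _ _)
    simp only [ContinuousMap.evalCLM_apply] at h1
    rw [ContinuousMap.add_apply, ← h1, h2]
    simp
  have hD : HasDerivAt H (H' s) s := by
    have : HasDerivAt (fun r => H 0 + ∫ q in (0:ℝ)..r, H' q) (H' s) s :=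
      (intervalIntegral.integral_hasDerivAt_right (hc.intervalIntegrable _ _)
        hc.stronglyMeasurable.stronglyMeasurableAtFilter hc.continuousAt).const_add _
    exact this.congr_of_eventuallyEq (Eventually.of_forall key)
  have h3 := hD.tendsto_slope
  refine hS.mem_of_tendsto h3 (Eventually.of_forall fun r => ?_)
  simp only [slope, vsub_eq_sub]
  exact S.smul_mem _ (S.sub_mem (hm _) (hm _))

lemma conv_mem [CompleteSpace V] [FiniteDimensional ℝ V] (R : ℝ)
    (S : Submodule ℝ C(closedBall (0 : V) R, ℝ × V))
    (hS : IsClosed (S : Set C(closedBall (0 : V) R, ℝ × V)))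
    (u v τ τ' : C(ℝ, ℝ)) (hm : ∀ a b, ridge R u v a b ∈ S) (ψ : ℝ → ℝ) (hψ : Continuous ψ)
    (hψc : HasCompactSupport ψ) (hτ : ∀ t, τ t = ∫ s, ψ s * u (t - s))
    (hτ' : ∀ t, τ' t = ∫ s, ψ s * v (t - s)) (a : V) (b : ℝ) :
    ridge R τ τ' a b ∈ S := by
  let G : ℝ → C(closedBall (0 : V) R, ℝ × V) := fun s => ψ s • ridge R u v a (b - s)
  have hG : Continuous G := by
    apply ContinuousMap.continuous_of_continuous_uncurry
    simp only [G, ridge, ContinuousMap.smul_apply, ContinuousMap.coe_mk, Function.uncurry_def]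
    fun_prop
  have hGi : Integrable G := hG.integrable_of_hasCompactSupport (hψc.smul_right)
  have hI := integral_mem' S hS volume G hG (fun s => S.smul_mem _ (hm _ _)) hGi
  convert hI using 1
  ext x
  · rw [ContinuousMap.integral_apply hGi]
    rw [show (∫ s, G s x).1 = ∫ s, (G s x).1 from
      ((ContinuousLinearMap.fst ℝ ℝ V).integral_comp_comm (φ := fun s => G s x) (
        (ContinuousMap.evalCLM ℝ x : C(_, ℝ × V) →L[ℝ] _).integrable_comp hGi)).symm]
    simp only [ridge, ContinuousMap.coe_mk, hτ, G, ContinuousMap.smul_apply, Prod.smul_mk, smul_eq_mul]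
    congr 1; ext s; ring_nf
  · rw [ContinuousMap.integral_apply hGi]
    rw [show (∫ s, G s x).2 = ∫ s, (G s x).2 from
      ((ContinuousLinearMap.snd ℝ ℝ V).integral_comp_comm (φ := fun s => G s x) (
        (ContinuousMap.evalCLM ℝ x : C(_, ℝ × V) →L[ℝ] _).integrable_comp hGi)).symm]
    simp only [ridge, ContinuousMap.coe_mk, hτ', G, ContinuousMap.smul_apply, Prod.smul_mk, smul_smul]
    rw [integral_smul_const]
    congr 2; ext s; ring_nf

lemma monomial_mem [FiniteDimensional ℝ V] (R : ℝ)
    (S : Submodule ℝ C(closedBall (0 : V) R, ℝ × V))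
    (hS : IsClosed (S : Set C(closedBall (0 : V) R, ℝ × V)))
    (D : ℕ → C(ℝ, ℝ)) (hD : ∀ j t, HasDerivAt (D j) (D (j+1) t) t)
    (hm : ∀ a b, ridge R (D 0) (D 1) a b ∈ S) (k : ℕ) (b : ℝ) (hb : D k b ≠ 0) (a : V) :
    ridge R ⟨fun t => t ^ k, by fun_prop⟩ ⟨fun t => k * t ^ (k - 1), by fun_prop⟩ a 0 ∈ S := by
  let W : ℕ → ℝ → C(closedBall (0 : V) R, ℝ × V) := fun j s =>
    ⟨fun x => ((inner ℝ a (x : V)) ^ j * D j (s * inner ℝ a (x : V) + b),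
      (j * (inner ℝ a (x : V)) ^ (j - 1) * D j (s * inner ℝ a (x : V) + b)
        + (inner ℝ a (x : V)) ^ j * (s * D (j + 1) (s * inner ℝ a (x : V) + b))) • a), by fun_prop⟩
  have hW : ∀ j s, W j s ∈ S := by
    intro j
    induction j with
    | zero =>
      intro s
      convert hm (s • a) b using 1
      ext x
      · simp [W, ridge, inner_smul_left]
      · simp [W, ridge, inner_smul_left, smul_smul, mul_comm]
    | succ j ih =>
      refine curve_deriv_mem S hS (W j) (W (j+1)) ?_ ?_ ih
      · apply ContinuousMap.continuous_of_continuous_uncurry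
        simp only [W, ContinuousMap.coe_mk, Function.uncurry_def]
        fun_prop
      · intro s x
        simp only [W, ContinuousMap.coe_mk]
        set t := inner ℝ a (x : V)
        have hl : HasDerivAt (fun r : ℝ => r * t + b) t s := by
          simpa using ((hasDerivAt_id s).mul_const t).add_const b
        have h0 : HasDerivAt (fun r => D j (r * t + b)) (D (j+1) (s * t + b) * t) s :=
          (hD j (s * t + b)).comp s hl
        have h1 : HasDerivAt (fun r => D (j+1) (r * t + b)) (D (j+1+1) (s * t + b) * t) s :=
          (hD (j+1) (s * t + b)).comp s hl
        refine HasDerivAt.prodMk ?_ (HasDerivAt.smul_const ?_ a)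
        · exact (h0.const_mul (t ^ j)).congr_deriv (by ring)
        · refine ((h0.const_mul (j * t ^ (j-1))).fun_add
            (((hasDerivAt_id' s).fun_mul h1).const_mul (t ^ j))).congr_deriv ?_
          rcases j with _ | j
          · simp; ring
          · simp; ring
  have := S.smul_mem (D k b)⁻¹ (hW k 0)
  convert this using 1
  ext x
  · simp [W, ridge]; field_simp
  · simp [W, ridge, smul_smul]; congr 1; field_simp


lemma poly_mem (R : ℝ)
    (S : Submodule ℝ C(closedBall (0 : V) R, ℝ × V)) (a : V)
    (hk : ∀ k : ℕ, ridge R ⟨fun t => t ^ k, by fun_prop⟩ ⟨fun t => k * t ^ (k - 1), by fun_prop⟩ a 0 ∈ S)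
    (p : Polynomial ℝ) :
    ridge R p.toContinuousMap p.derivative.toContinuousMap a 0 ∈ S := by
  induction p using Polynomial.induction_on' with
  | add p q hp hq =>
    convert S.add_mem hp hq using 1
    ext x
    · simp [ridge]
    · simp [ridge, add_smul]
  | monomial k c =>
    convert S.smul_mem c (hk k) using 1
    ext x
    · simp [ridge]
    · simp [ridge, smul_smul, Polynomial.derivative_monomial, mul_assoc]

lemma exists_antideriv (p : Polynomial ℝ) (c : ℝ) :
    ∃ q : Polynomial ℝ, q.derivative = p ∧ q.eval 0 = c := by
  have : ∃ q : Polynomial ℝ, q.derivative = p := by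
    induction p using Polynomial.induction_on' with
    | add p q hp hq =>
      obtain ⟨a, rfl⟩ := hp
      obtain ⟨b, rfl⟩ := hq
      exact ⟨a + b, by simp⟩
    | monomial k c =>
      refine ⟨Polynomial.monomial (k+1) (c / (k+1)), ?_⟩
      rw [Polynomial.derivative_monomial]
      congr 1
      push_cast
      field_simp
  obtain ⟨q, hq⟩ := this
  exact ⟨q + Polynomial.C (c - q.eval 0), by simp [hq], by simp⟩

lemma c1_mem [FiniteDimensional ℝ V] (R : ℝ)
    (S : Submodule ℝ C(closedBall (0 : V) R, ℝ × V))
    (hS : IsClosed (S : Set C(closedBall (0 : V) R, ℝ × V))) (a : V)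
    (hp : ∀ p : Polynomial ℝ, ridge R p.toContinuousMap p.derivative.toContinuousMap a 0 ∈ S)
    (u v : C(ℝ, ℝ)) (huv : ∀ t, HasDerivAt u (v t) t) :
    ridge R u v a 0 ∈ S := by
  rw [← SetLike.mem_coe, ← hS.closure_eq, Metric.mem_closure_iff]
  intro ε hε
  set r := ‖a‖ * |R| with hr
  have hr0 : 0 ≤ r := by positivity
  set δ := ε / (2 * (1 + r + ‖a‖)) with hδ
  have hpos : 0 < 1 + r + ‖a‖ := by positivity
  have hδ0 : 0 < δ := by positivity
  have hδe : δ * (1 + r + ‖a‖) = ε / 2 := by rw [hδ]; field_simp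
  obtain ⟨p, hpn⟩ := exists_polynomial_near_of_continuousOn (-r) r v v.continuous.continuousOn δ hδ0
  obtain ⟨q, hq, hq0⟩ := exists_antideriv p (u 0)
  refine ⟨_, hp q, ?_⟩
  have hval : ∀ t ∈ Icc (-r) r, |u t - q.eval t| ≤ δ * r := by
    intro t ht
    have h := Convex.norm_image_sub_le_of_norm_hasDerivWithin_le (f := fun t => u t - q.eval t)
      (f' := fun t => v t - p.eval t) (s := Icc (-r) r) (C := δ) (x := 0) (y := t)
      (fun z _ => ((huv z).sub (hq ▸ q.hasDerivAt z)).hasDerivWithinAt)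
      (fun z hz => by rw [Real.norm_eq_abs, abs_sub_comm]; exact (hpn z hz).le)
      (convex_Icc _ _) ⟨by linarith, hr0⟩ ht
    simp only [hq0, sub_self, sub_zero, Real.norm_eq_abs] at h
    exact h.trans (mul_le_mul_of_nonneg_left (abs_le.2 ht) hδ0.le)
  refine lt_of_le_of_lt ((ContinuousMap.dist_le (by positivity : 0 ≤ ε / 2)).2 ?_) (half_lt_self hε)
  intro x
  have hx : inner ℝ a (x : V) ∈ Icc (-r) r := by
    have h1 := abs_real_inner_le_norm a (x : V)
    have h2 : ‖(x : V)‖ ≤ |R| := (mem_closedBall_zero_iff.1 x.2).trans (le_abs_self R)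
    exact abs_le.1 (h1.trans (mul_le_mul_of_nonneg_left h2 (norm_nonneg a)))
  rw [Prod.dist_eq]
  refine max_le ?_ ?_
  · simp only [ridge, ContinuousMap.coe_mk, add_zero, Polynomial.toContinuousMap_apply, Real.dist_eq]
    refine (hval _ hx).trans ?_
    rw [← hδe]
    refine mul_le_mul_of_nonneg_left ?_ hδ0.le
    linarith [norm_nonneg a]
  · simp only [ridge, ContinuousMap.coe_mk, add_zero, Polynomial.toContinuousMap_apply, dist_eq_norm,
      ← sub_smul, hq, norm_smul, Real.norm_eq_abs]
    rw [abs_sub_comm, ← hδe]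
    refine mul_le_mul (hpn _ hx).le ?_ (norm_nonneg _) hδ0.le
    linarith

lemma poly_of_iteratedDeriv (k : ℕ) : ∀ (D : ℕ → ℝ → ℝ) (_ : ∀ j t, HasDerivAt (D j) (D (j+1) t) t)
    (_ : ∀ t, D k t = 0), ∃ p : Polynomial ℝ, p.degree < k ∧ ∀ t, D 0 t = p.eval t := by
  induction k with
  | zero => exact fun D _ h => ⟨0, by simp, by simpa using h⟩
  | succ k ih =>
    intro D hD h
    obtain ⟨p, hp, hpe⟩ := ih (fun j => D (j+1)) (fun j => hD (j+1)) h
    obtain ⟨q, hq, hq0⟩ := exists_antideriv p (D 0 0)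
    refine ⟨q, ?_, ?_⟩
    · rcases Nat.eq_zero_or_pos q.natDegree with h0 | h0
      · refine lt_of_le_of_lt Polynomial.degree_le_natDegree ?_
        rw [h0]; exact_mod_cast Nat.succ_pos k
      · have h1 := Polynomial.degree_derivative (p := q) h0.ne'
        rw [hq] at h1
        rw [h1] at hp
        refine lt_of_le_of_lt Polynomial.degree_le_natDegree ?_
        have : q.natDegree - 1 < k := by exact_mod_cast hp
        exact_mod_cast (by omega : q.natDegree < k + 1)
    · intro t
      have hd : ∀ z, HasDerivAt (fun z => D 0 z - q.eval z) 0 z := fun z =>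
        ((hD 0 z).fun_sub (q.hasDerivAt z)).congr_deriv (by rw [hq, ← hpe]; simp)
      have := is_const_of_deriv_eq_zero (fun z => (hd z).differentiableAt) (fun z => (hd z).deriv) t 0
      simp only [hq0, sub_self] at this
      linarith

lemma exists_bump (σ : ℝ → ℝ) (hσ : Continuous σ)
    (hpoly : ¬ ∃ p : Polynomial ℝ, ∀ t : ℝ, σ t = p.eval t) (k : ℕ) :
    ∃ (φ : ContDiffBump (0 : ℝ)), ∃ b,
      iteratedDeriv k (convolution (φ.normed volume) σ (ContinuousLinearMap.lsmul ℝ ℝ) volume) b ≠ 0 := by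
  by_contra! hcon
  apply hpoly
  let φ : ℕ → ContDiffBump (0 : ℝ) := fun i =>
    ⟨1 / ((i : ℝ) + 1) / 2, 1 / ((i : ℝ) + 1), by positivity, half_lt_self (by positivity)⟩
  have hφ : Tendsto (fun i => (φ i).rOut) atTop (𝓝 0) := tendsto_one_div_add_atTop_nhds_zero_nat
  have hlim := fun x => ContDiffBump.convolution_tendsto_right_of_continuous (μ := volume) hφ hσ x
  set τ : ℕ → ℝ → ℝ := fun i =>
    convolution ((φ i).normed volume) σ (ContinuousLinearMap.lsmul ℝ ℝ) volume with hτ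
  have hex : ∀ i, ∃ p : Polynomial ℝ, p.degree < k ∧ ∀ t, τ i t = p.eval t := by
    intro i
    have hs : ContDiff ℝ (⊤ : ℕ∞) (τ i) :=
      (φ i).hasCompactSupport_normed.contDiff_convolution_left _ (φ i).contDiff_normed
        hσ.locallyIntegrable
    obtain ⟨p, hp, h⟩ := poly_of_iteratedDeriv k (fun j => iteratedDeriv j (τ i)) (fun j t => by
      rw [iteratedDeriv_succ]
      exact ((hs.differentiable_iteratedDeriv j (by exact_mod_cast WithTop.coe_lt_top _)) t).hasDerivAt)
      (hcon (φ i))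
    exact ⟨p, hp, fun t => by simpa using h t⟩
  let nd : Fin k → ℝ := fun i => (i : ℕ)
  have hnd : Set.InjOn nd (Finset.univ : Finset (Fin k)) := by
    intro i _ j _ h
    have h' : ((i : ℕ) : ℝ) = ((j : ℕ) : ℝ) := h
    exact Fin.ext (Nat.cast_injective h')
  refine ⟨Lagrange.interpolate Finset.univ nd (fun i => σ (nd i)), fun t => ?_⟩
  have h2 : ∀ i, τ i t = (Lagrange.interpolate Finset.univ nd (fun j => τ i (nd j))).eval t := by
    intro i
    obtain ⟨p, hp, h⟩ := hex i
    rw [h t, Lagrange.eq_interpolate_of_eval_eq (f := p) (fun j => τ i (nd j)) hnd (by simpa using hp)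
      (fun j _ => (h _).symm)]
  refine tendsto_nhds_unique (hlim t) ?_
  have h3 : (fun i => τ i t) = fun i => (Lagrange.interpolate Finset.univ nd (fun j => τ i (nd j))).eval t :=
    funext h2
  change Tendsto (fun i => τ i t) _ _
  rw [h3]
  simp only [Lagrange.interpolate_apply, Polynomial.eval_finsetSum, Polynomial.eval_mul,
    Polynomial.eval_C]
  exact tendsto_finsetSum _ fun j _ => (hlim (nd j)).mul_const _

lemma conv_deriv (ψ σ : ℝ → ℝ) (hψ : Continuous ψ) (hψc : HasCompactSupport ψ) (hσ : ContDiff ℝ 1 σ)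
    (t : ℝ) : HasDerivAt (fun t => ∫ s, ψ s * σ (t - s)) (∫ s, ψ s * deriv σ (t - s)) t := by
  have hc := hσ.continuous
  have hc' : Continuous (deriv σ) := hσ.continuous_deriv le_rfl
  obtain ⟨C, hC⟩ := (((isCompact_closedBall t 1).prod hψc.isCompact).image
    (f := fun q : ℝ × ℝ => deriv σ (q.1 - q.2)) (by fun_prop)).isBounded.exists_norm_le
  refine (hasDerivAt_integral_of_dominated_loc_of_deriv_le (F := fun t s => ψ s * σ (t - s))
    (F' := fun t s => ψ s * deriv σ (t - s)) (bound := fun s => ‖ψ s‖ * C)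
    (closedBall_mem_nhds t one_pos) ?_ ?_ ?_ ?_ ?_ ?_).2
  · exact Eventually.of_forall fun x => (by fun_prop : Continuous _).aestronglyMeasurable
  · exact (by fun_prop : Continuous _).integrable_of_hasCompactSupport hψc.mul_right
  · exact (by fun_prop : Continuous _).aestronglyMeasurable
  · refine Eventually.of_forall fun s x hx => ?_
    rw [norm_mul]
    by_cases hs : s ∈ tsupport ψ
    · exact mul_le_mul_of_nonneg_left (hC _ ⟨(x, s), ⟨hx, hs⟩, rfl⟩) (norm_nonneg _)
    · simp [image_eq_zero_of_notMem_tsupport hs]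
  · exact (hψ.integrable_of_hasCompactSupport hψc).norm.mul_const C
  · refine Eventually.of_forall fun s x hx => ?_
    have h1 : HasDerivAt σ (deriv σ (x - s)) (x - s) :=
      (hσ.differentiable one_ne_zero _).hasDerivAt
    exact ((h1.comp_sub_const x s)).const_mul _

lemma c1_mem_of_sigma [FiniteDimensional ℝ V] (R : ℝ)
    (S : Submodule ℝ C(closedBall (0 : V) R, ℝ × V))
    (hS : IsClosed (S : Set C(closedBall (0 : V) R, ℝ × V)))
    (σ σ' : C(ℝ, ℝ)) (hσ : ContDiff ℝ 1 σ) (hσ' : ∀ t, σ' t = deriv σ t)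
    (hpoly : ¬ ∃ p : Polynomial ℝ, ∀ t : ℝ, σ t = p.eval t)
    (hm : ∀ a b, ridge R σ σ' a b ∈ S)
    (u v : C(ℝ, ℝ)) (huv : ∀ t, HasDerivAt u (v t) t) (a : V) :
    ridge R u v a 0 ∈ S := by
  have : CompleteSpace V := FiniteDimensional.complete ℝ V
  refine c1_mem R S hS a (poly_mem R S a fun k => ?_) u v huv
  obtain ⟨φ, b, hb⟩ := exists_bump σ σ.continuous hpoly k
  set τ : ℝ → ℝ := convolution (φ.normed volume) σ (ContinuousLinearMap.lsmul ℝ ℝ) volume with hτ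
  have hs : ContDiff ℝ (⊤ : ℕ∞) τ :=
    φ.hasCompactSupport_normed.contDiff_convolution_left _ φ.contDiff_normed
        σ.continuous.locallyIntegrable
  let D : ℕ → C(ℝ, ℝ) := fun j => ⟨iteratedDeriv j τ,
    hs.continuous_iteratedDeriv j (by exact_mod_cast le_top)⟩
  have hD : ∀ j t, HasDerivAt (D j) (D (j+1) t) t := fun j t => by
    simp only [D, ContinuousMap.coe_mk]
    rw [iteratedDeriv_succ]
    exact ((hs.differentiable_iteratedDeriv j (by exact_mod_cast WithTop.coe_lt_top _)) t).hasDerivAt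
  have hD0 : ∀ t, D 0 t = ∫ s, φ.normed volume s * σ (t - s) := fun t => by
    simp [D, hτ, convolution]
  refine monomial_mem R S hS D hD (fun a b => ?_) k b hb a
  refine conv_mem R S hS σ σ' (D 0) (D 1) hm (φ.normed volume) φ.continuous_normed
    φ.hasCompactSupport_normed hD0 ?_ a b
  intro t
  have h1 := conv_deriv (φ.normed volume) σ φ.continuous_normed φ.hasCompactSupport_normed hσ t
  rw [← funext hD0] at h1
  simp only [hσ']
  exact (hD 0 t).unique h1


open scoped FourierTransform ContDiff

lemma smooth_mem [FiniteDimensional ℝ V] [MeasurableSpace V] [BorelSpace V] (R : ℝ)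
    (S : Submodule ℝ C(closedBall (0 : V) R, ℝ × V))
    (hS : IsClosed (S : Set C(closedBall (0 : V) R, ℝ × V)))
    (hm : ∀ (u v : C(ℝ, ℝ)), (∀ t, HasDerivAt u (v t) t) → ∀ a : V, ridge R u v a 0 ∈ S)
    (g : V → ℝ) (hg : ContDiff ℝ ∞ g) (hgc : HasCompactSupport g) :
    ∃ F ∈ S, ∀ x, (F x).1 = g x := by
  have : CompleteSpace V := FiniteDimensional.complete ℝ V
  have hc1 : HasCompactSupport (fun x => (g x : ℂ)) := hgc.comp_left (g := fun r : ℝ => (r : ℂ)) (by simp)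
  have hc2 : ContDiff ℝ ∞ (fun x => (g x : ℂ)) := Complex.ofRealCLM.contDiff.comp hg
  let f : SchwartzMap V ℂ := hc1.toSchwartzMap hc2
  let h : SchwartzMap V ℂ := 𝓕 f
  have hinv : ∀ x, (g x : ℂ) = ∫ ξ, Complex.exp (2 * Real.pi * (inner ℝ ξ x : ℝ) * Complex.I) * h ξ := by
    intro x
    have h1 : 𝓕⁻ h = f := FourierTransform.fourierInv_fourier_eq f
    have h2 : (𝓕⁻ h) x = f x := by rw [h1]
    rw [SchwartzMap.fourierInv_coe, Real.fourierInv_eq'] at h2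
    change f x = _
    rw [← h2]
    simp
  let u : V → C(ℝ, ℝ) := fun ξ =>
    ⟨fun t => (h ξ).re * Real.cos (2 * Real.pi * t) - (h ξ).im * Real.sin (2 * Real.pi * t), by fun_prop⟩
  let v : V → C(ℝ, ℝ) := fun ξ =>
    ⟨fun t => (2 * Real.pi) * (- (h ξ).re * Real.sin (2 * Real.pi * t)
        - (h ξ).im * Real.cos (2 * Real.pi * t)), by fun_prop⟩
  have huv : ∀ ξ t, HasDerivAt (u ξ) (v ξ t) t := by
    intro ξ t
    have h0 : HasDerivAt (fun t : ℝ => 2 * Real.pi * t) (2 * Real.pi) t := by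
      simpa using (hasDerivAt_id t).const_mul (2 * Real.pi)
    exact ((h0.cos.const_mul (h ξ).re).fun_sub (h0.sin.const_mul (h ξ).im)).congr_deriv (by
      simp only [v, ContinuousMap.coe_mk]; ring)
  let G : V → C(closedBall (0 : V) R, ℝ × V) := fun ξ => ridge R (u ξ) (v ξ) ξ 0
  have hhc : Continuous h := h.continuous
  have hG : Continuous G := by
    apply ContinuousMap.continuous_of_continuous_uncurry
    simp only [G, ridge, u, v, ContinuousMap.coe_mk, Function.uncurry_def]
    fun_prop
  have hb : ∀ z : ℂ, ∀ t : ℝ, |z.re| * |Real.cos t| ≤ ‖z‖ ∧ |z.im| * |Real.sin t| ≤ ‖z‖ ∧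
      |z.re| * |Real.sin t| ≤ ‖z‖ ∧ |z.im| * |Real.cos t| ≤ ‖z‖ := by
    intro z t
    have a1 := Complex.abs_re_le_norm z
    have a2 := Complex.abs_im_le_norm z
    have a3 := Real.abs_cos_le_one t
    have a4 := Real.abs_sin_le_one t
    refine ⟨?_, ?_, ?_, ?_⟩ <;>
    exact (mul_le_of_le_one_right (abs_nonneg _) (by assumption)).trans (by assumption)
  have hGi : Integrable G := by
    have hi1 : Integrable (fun ξ => ‖h ξ‖) := h.integrable.norm
    have hi2 : Integrable (fun ξ => ‖ξ‖ ^ 1 * ‖h ξ‖) := h.integrable_pow_mul volume 1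
    refine Integrable.mono' ((hi1.const_mul 2).add (hi2.const_mul (2 * Real.pi * 2)))
      hG.aestronglyMeasurable (Eventually.of_forall fun ξ => ?_)
    have hpi := Real.pi_pos
    have n1 := norm_nonneg (h ξ)
    have n2 := norm_nonneg ξ
    have n3 : 0 ≤ 2 * ‖h ξ‖ := by positivity
    have n4 : 0 ≤ (2 * Real.pi * 2) * (‖ξ‖ ^ 1 * ‖h ξ‖) := by positivity
    simp only [Pi.add_apply]
    refine (ContinuousMap.norm_le _ (by positivity)).2 fun x => ?_
    simp only [G, ridge, ContinuousMap.coe_mk, Prod.norm_def]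
    obtain ⟨b1, b2, b3, b4⟩ := hb (h ξ) (2 * Real.pi * (inner ℝ ξ (x : V) + 0))
    refine max_le ?_ ?_
    · simp only [u, ContinuousMap.coe_mk]
      refine (norm_sub_le _ _).trans ?_
      simp only [norm_mul, Real.norm_eq_abs]
      linarith
    · simp only [v, ContinuousMap.coe_mk, norm_smul, norm_mul]
      have : ‖-(h ξ).re * Real.sin (2 * Real.pi * (inner ℝ ξ (x : V) + 0))
        - (h ξ).im * Real.cos (2 * Real.pi * (inner ℝ ξ (x : V) + 0))‖ ≤ 2 * ‖h ξ‖ := by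
        refine (norm_sub_le _ _).trans ?_
        simp only [norm_mul, norm_neg, Real.norm_eq_abs]
        linarith
      have e : ‖(2:ℝ)‖ * ‖Real.pi‖ = 2 * Real.pi := by
        rw [Real.norm_of_nonneg, Real.norm_of_nonneg] <;> positivity
      rw [e]
      calc _ ≤ 2 * Real.pi * (2 * ‖h ξ‖) * ‖ξ‖ := by gcongr
        _ = (2 * Real.pi * 2) * (‖ξ‖ ^ 1 * ‖h ξ‖) := by ring
        _ ≤ _ := by linarith
  refine ⟨∫ ξ, G ξ, integral_mem' S hS volume G hG (fun ξ => hm _ _ (huv ξ) _) hGi, fun x => ?_⟩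
  rw [ContinuousMap.integral_apply hGi]
  rw [show (∫ s, G s x).1 = ∫ s, (G s x).1 from
      ((ContinuousLinearMap.fst ℝ ℝ V).integral_comp_comm (φ := fun s => G s x) (
        (ContinuousMap.evalCLM ℝ x : C(_, ℝ × V) →L[ℝ] _).integrable_comp hGi)).symm]
  have h3 : g x = (∫ ξ, Complex.exp (2 * Real.pi * (inner ℝ ξ (x:V) : ℝ) * Complex.I) * h ξ).re := by
    rw [← hinv x]; simp
  rw [h3]
  have hint : Integrable fun ξ => Complex.exp (2 * Real.pi * (inner ℝ ξ (x:V) : ℝ) * Complex.I) * h ξ := by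
    refine Integrable.mono' h.integrable.norm (by fun_prop : Continuous _).aestronglyMeasurable
      (Eventually.of_forall fun ξ => ?_)
    rw [norm_mul, show (2 * Real.pi * (inner ℝ ξ (x:V) : ℝ) * Complex.I : ℂ)
      = ((2 * Real.pi * inner ℝ ξ (x:V) : ℝ) : ℂ) * Complex.I by push_cast; ring,
      Complex.norm_exp_ofReal_mul_I, one_mul]
  have h4 := Complex.reCLM.integral_comp_comm hint
  simp only [Complex.reCLM_apply] at h4
  rw [← h4]
  congr 1; ext ξ
  rw [show (2 * Real.pi * (inner ℝ ξ (x:V) : ℝ) * Complex.I : ℂ)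
      = ((2 * Real.pi * inner ℝ ξ (x:V) : ℝ) : ℂ) * Complex.I by push_cast; ring, Complex.mul_re,
      Complex.exp_ofReal_mul_I_re, Complex.exp_ofReal_mul_I_im]
  simp only [G, ridge, u, ContinuousMap.coe_mk, add_zero]
  ring

lemma lip_of_mem [CompleteSpace V] [FiniteDimensional ℝ V] (R : ℝ) (σ σ' : C(ℝ, ℝ))
    (hσ : ∀ t, HasDerivAt σ (σ' t) t) (F : C(closedBall (0 : V) R, ℝ × V))
    (hF : F ∈ (Submodule.span ℝ (range fun q : V × ℝ => ridge R σ σ' q.1 q.2)).topologicalClosure)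
    (x y : closedBall (0 : V) R) : |(F x).1 - (F y).1| ≤ ‖F‖ * ‖(x : V) - y‖ := by
  have hspan : ∀ F ∈ Submodule.span ℝ (range fun q : V × ℝ => ridge R σ σ' q.1 q.2),
      ∃ φ : V → ℝ, ∀ x : closedBall (0 : V) R,
        HasFDerivAt φ (innerSL ℝ (F x).2) x ∧ φ x = (F x).1 := by
    intro F hF
    induction hF using Submodule.span_induction with
    | mem F h =>
      obtain ⟨q, rfl⟩ := h
      refine ⟨fun x => σ (inner ℝ q.1 x + q.2), fun x => ⟨?_, rfl⟩⟩
      have h1 : HasFDerivAt (fun x : V => inner ℝ q.1 x + q.2) (innerSL ℝ q.1) (x : V) :=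
        (innerSL ℝ q.1).hasFDerivAt.add_const _
      refine ((hσ _).comp_hasFDerivAt (x : V) h1).congr_fderiv ?_
      ext z
      simp [ridge, inner_smul_left]
    | zero => exact ⟨fun _ => 0, fun x => ⟨by simpa using hasFDerivAt_const (0:ℝ) (x:V), rfl⟩⟩
    | add F G _ _ hF hG =>
      obtain ⟨φ, h1⟩ := hF
      obtain ⟨χ, h2⟩ := hG
      refine ⟨φ + χ, fun x => ⟨((h1 x).1.add (h2 x).1).congr_fderiv (by simp), by
        simp [(h1 x).2, (h2 x).2]⟩⟩
    | smul c F _ hF =>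
      obtain ⟨φ, h1⟩ := hF
      refine ⟨c • φ, fun x => ⟨((h1 x).1.const_smul c).congr_fderiv (by simp), by
        simp [(h1 x).2]⟩⟩
  have hcl : IsClosed {F : C(closedBall (0 : V) R, ℝ × V) |
      |(F x).1 - (F y).1| ≤ ‖F‖ * ‖(x : V) - y‖} := by
    apply isClosed_le
    · have h1 := (ContinuousMap.evalCLM ℝ x : C(closedBall (0 : V) R, ℝ × V) →L[ℝ] _).continuous
      have h2 := (ContinuousMap.evalCLM ℝ y : C(closedBall (0 : V) R, ℝ × V) →L[ℝ] _).continuous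
      exact ((continuous_fst.comp h1).sub (continuous_fst.comp h2)).abs
    · fun_prop
  have hF' : F ∈ closure (Submodule.span ℝ (range fun q : V × ℝ => ridge R σ σ' q.1 q.2) :
      Set C(closedBall (0 : V) R, ℝ × V)) := hF
  refine closure_minimal (fun F hF => ?_) hcl hF'
  obtain ⟨φ, h⟩ := hspan F hF
  have := (convex_closedBall (0:V) R).norm_image_sub_le_of_norm_hasFDerivWithin_le
    (f := φ) (f' := fun z => fderiv ℝ φ z) (C := ‖F‖)
    (fun z hz => by
      have := (h ⟨z, hz⟩).1
      exact (this.differentiableAt.hasFDerivAt).hasFDerivWithinAt)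
    (fun z hz => by
      have := (h ⟨z, hz⟩).1
      rw [this.fderiv, innerSL_apply_norm]
      exact (norm_snd_le _).trans (F.norm_coe_le_norm ⟨z, hz⟩)) y.2 x.2
  rwa [(h x).2, (h y).2, Real.norm_eq_abs] at this

lemma mollify [FiniteDimensional ℝ V] [MeasurableSpace V] [BorelSpace V] (F : V → ℝ)
    (L : NNReal) (hF : LipschitzWith L F) (δ : ℝ) (hδ : 0 < δ) :
    ∃ g : V → ℝ, ContDiff ℝ ∞ g ∧ (∀ x, |g x - F x| ≤ δ) ∧ ∀ x y, |g x - g y| ≤ L * ‖x - y‖ := by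
  let φ : ContDiffBump (0 : V) := ⟨δ / (L + 1) / 2, δ / (L + 1), by positivity, half_lt_self (by positivity)⟩
  let g : V → ℝ := convolution (φ.normed volume) F (ContinuousLinearMap.lsmul ℝ ℝ) volume
  have hFc := hF.continuous
  refine ⟨g, ?_, ?_, ?_⟩
  · exact φ.hasCompactSupport_normed.contDiff_convolution_left _ φ.contDiff_normed
        hFc.locallyIntegrable
  · intro x
    refine φ.dist_normed_convolution_le hFc.aestronglyMeasurable fun z hz => ?_
    refine (hF.dist_le_mul z x).trans ?_
    have h1 : dist z x ≤ δ / (L + 1) := (mem_ball.1 hz).le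
    calc (L : ℝ) * dist z x ≤ (L + 1) * (δ / (L + 1)) := by gcongr; linarith
      _ = δ := by field_simp
  · intro x y
    have hi : ∀ x, Integrable (fun s => φ.normed volume s * F (x - s)) := fun x =>
      (φ.continuous_normed.mul (by fun_prop)).integrable_of_hasCompactSupport
        φ.hasCompactSupport_normed.mul_right
    have e : g x - g y = ∫ s, φ.normed volume s * (F (x - s) - F (y - s)) := by
      simp only [g, convolution, ContinuousLinearMap.lsmul_apply, smul_eq_mul]
      rw [← integral_sub (hi x) (hi y)]
      simp only [mul_sub]
    rw [e]
    have h2 : ∫ s, φ.normed volume s * (L * ‖x - y‖) = L * ‖x - y‖ := by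
      rw [integral_mul_const, φ.integral_normed, one_mul]
    rw [← h2, ← Real.norm_eq_abs]
    refine norm_integral_le_of_norm_le ((φ.integrable_normed (μ := volume)).mul_const _) (Eventually.of_forall fun s => ?_)
    rw [norm_mul, Real.norm_of_nonneg (φ.nonneg_normed s)]
    refine mul_le_mul_of_nonneg_left ?_ (φ.nonneg_normed s)
    simpa [dist_eq_norm] using hF.dist_le_mul (x - s) (y - s)

lemma scalar_approx [FiniteDimensional ℝ V] (K : Set V) (R : ℝ) (hR : K ⊆ closedBall 0 R)
    (σ : ℝ → ℝ) (hσ : ContDiff ℝ 1 σ)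
    (hpoly : ¬ ∃ p : Polynomial ℝ, ∀ t : ℝ, σ t = p.eval t)
    (f : V → ℝ) (L : NNReal) (hf : LipschitzOnWith L f K) (δ : ℝ) (hδ : 0 < δ) :
    ∃ c : V × ℝ →₀ ℝ,
      (∀ x ∈ K, |f x - c.sum (fun q w => w * σ (inner ℝ q.1 x + q.2))| ≤ δ) ∧
      (∀ x ∈ K, ∀ y ∈ K, |c.sum (fun q w => w * σ (inner ℝ q.1 x + q.2)) -
        c.sum (fun q w => w * σ (inner ℝ q.1 y + q.2))| ≤ (L + δ) * ‖x - y‖) := by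
  have : CompleteSpace V := FiniteDimensional.complete ℝ V
  borelize V
  obtain ⟨F, hF, hFf⟩ := hf.extend_real
  obtain ⟨g, hg, hgF, hgL⟩ := mollify F L hF (δ / 2) (by positivity)
  let χ : ContDiffBump (0 : V) := ⟨max R 1, max R 1 + 1, by positivity, by linarith⟩
  let g1 : V → ℝ := fun x => χ x * g x
  have hg1 : ContDiff ℝ ∞ g1 := χ.contDiff.mul hg
  have hg1c : HasCompactSupport g1 := χ.hasCompactSupport.mul_right
  have hgg : ∀ x ∈ closedBall (0 : V) R, g1 x = g x := by
    intro x hx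
    simp only [g1]
    rw [χ.one_of_mem_closedBall (closedBall_subset_closedBall (le_max_left _ _) hx), one_mul]
  let s : C(ℝ, ℝ) := ⟨σ, hσ.continuous⟩
  let s' : C(ℝ, ℝ) := ⟨deriv σ, hσ.continuous_deriv le_rfl⟩
  have hss' : ∀ t, HasDerivAt s (s' t) t := fun t => (hσ.differentiable one_ne_zero t).hasDerivAt
  set T := Submodule.span ℝ (range fun q : V × ℝ => ridge R s s' q.1 q.2) with hT
  have hcl : IsClosed (T.topologicalClosure : Set C(closedBall (0 : V) R, ℝ × V)) :=
    T.isClosed_topologicalClosure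
  obtain ⟨H, hH, hHg⟩ := smooth_mem R T.topologicalClosure hcl
    (fun u v huv a => c1_mem_of_sigma R _ hcl s s' hσ (fun _ => rfl) hpoly
      (fun a b => T.le_topologicalClosure (Submodule.subset_span ⟨(a, b), rfl⟩)) u v huv a) g1 hg1 hg1c
  have hH' : H ∈ closure (T : Set C(closedBall (0 : V) R, ℝ × V)) := hH
  obtain ⟨P, hP, hPd⟩ := Metric.mem_closure_iff.1 hH' (δ / 2) (by positivity)
  rw [dist_eq_norm] at hPd
  obtain ⟨c, hc⟩ := Finsupp.mem_span_range_iff_exists_finsupp.1 (show P ∈ T from hP)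
  have hPc : ∀ x : closedBall (0 : V) R, (P x).1 = c.sum (fun q w => w * σ (inner ℝ q.1 (x:V) + q.2)) := by
    intro x
    rw [← hc, Finsupp.sum, Finsupp.sum, ContinuousMap.sum_apply, Prod.fst_sum]
    simp [ridge, s]
  refine ⟨c, fun x hx => ?_, fun x hx y hy => ?_⟩
  · have h1 := hPc ⟨x, hR hx⟩
    have h2 := hHg ⟨x, hR hx⟩
    have h3 : |(H ⟨x, hR hx⟩).1 - (P ⟨x, hR hx⟩).1| ≤ δ / 2 := by
      have := ((H - P).norm_coe_le_norm ⟨x, hR hx⟩)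
      exact ((norm_fst_le _).trans this).trans hPd.le
    have h4 := hgF x
    rw [h1, h2, hgg x (hR hx)] at h3
    rw [hFf hx]
    rw [abs_le] at *
    constructor <;> linarith [h3.1, h3.2, h4.1, h4.2]
  · have h1 := hPc ⟨x, hR hx⟩
    have h2 := hHg ⟨x, hR hx⟩
    have h1' := hPc ⟨y, hR hy⟩
    have h2' := hHg ⟨y, hR hy⟩
    have h3 := lip_of_mem R s s' hss' (H - P)
      (Submodule.sub_mem _ hH (T.le_topologicalClosure hP)) ⟨x, hR hx⟩ ⟨y, hR hy⟩
    have h4 := hgL x y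
    simp only [ContinuousMap.sub_apply, Prod.fst_sub] at h3
    rw [h1, h2, h1', h2', hgg x (hR hx), hgg y (hR hy)] at h3
    have h5 : ‖H - P‖ * ‖x - y‖ ≤ δ * ‖x - y‖ :=
      mul_le_mul_of_nonneg_right (by linarith) (norm_nonneg _)
    have h6 := h3.trans h5
    rw [add_mul]
    rw [abs_le] at *
    constructor <;> linarith [h6.1, h6.2, h4.1, h4.2]

end NNApprox

/-- Universal approximation of a function that is `L`-Lipschitz from the Euclidean
norm to the sup norm on a compact set by a one-hidden-layer neural network `φ(x) = C·σ(Ax + b)`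
with Lipschitz constant `L + ε(√(n + n/ε)/2 + L)` in the same norms.  The domain
`EuclideanSpace ℝ (Fin n)` carries the Euclidean norm and the codomain `Fin m → ℝ` the sup norm. -/
theorem stmt_1 (n m : ℕ) (K : Set (EuclideanSpace ℝ (Fin n))) (hK : IsCompact K)
    (σ : ℝ → ℝ) (hσ : ContDiff ℝ 1 σ)
    (hσpoly : ¬ ∃ p : Polynomial ℝ, ∀ t : ℝ, σ t = p.eval t)
    (f : EuclideanSpace ℝ (Fin n) → (Fin m → ℝ)) (L : ℝ)
    (hf : ∀ x ∈ K, ∀ y ∈ K, ‖f x - f y‖ ≤ L * ‖x - y‖)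
    (ε : ℝ) (hε : 0 < ε) :
    ∃ (k : ℕ) (A : Matrix (Fin k) (Fin n) ℝ) (b : Fin k → ℝ) (C : Matrix (Fin m) (Fin k) ℝ),
      (∀ x ∈ K, ‖f x - C.mulVec (fun i => σ ((A.mulVec x + b) i))‖ < ε) ∧
      (∀ x ∈ K, ∀ y ∈ K,
        ‖C.mulVec (fun i => σ ((A.mulVec x + b) i)) -
            C.mulVec (fun i => σ ((A.mulVec y + b) i))‖
          ≤ (L + ε * (Real.sqrt ((n : ℝ) + (n : ℝ) / ε) / 2 + L)) * ‖x - y‖) := by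
  obtain ⟨δ, hδ, hδε, hδn⟩ : ∃ δ : ℝ, 0 < δ ∧ δ < ε ∧
      (0 < n → δ ≤ ε * (Real.sqrt ((n : ℝ) + (n : ℝ) / ε) / 2)) := by
    rcases Nat.eq_zero_or_pos n with h | h
    · exact ⟨ε / 2, by positivity, by linarith, fun h' => by omega⟩
    · have h1 : (0 : ℝ) < n := by exact_mod_cast h
      have h2 : 0 < ε * (Real.sqrt ((n : ℝ) + (n : ℝ) / ε) / 2) := by positivity
      exact ⟨min (ε / 2) (ε * (Real.sqrt ((n : ℝ) + (n : ℝ) / ε) / 2)), by positivity,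
        (min_le_left _ _).trans_lt (by linarith), fun _ => min_le_right _ _⟩
  obtain ⟨R, hR⟩ := hK.isBounded.subset_closedBall 0
  have hlip : ∀ i, LipschitzOnWith L.toNNReal (fun x => f x i) K := by
    intro i
    refine LipschitzOnWith.of_dist_le_mul fun x hx y hy => ?_
    have h1 := norm_le_pi_norm (f x - f y) i
    have h2 := hf x hx y hy
    rw [Real.dist_eq, dist_eq_norm]
    refine (h1.trans h2).trans (mul_le_mul_of_nonneg_right ?_ (norm_nonneg _))
    exact Real.le_coe_toNNReal L
  choose c hc1 hc2 using fun i => NNApprox.scalar_approx K R hR σ hσ hσpoly (fun x => f x i) L.toNNReal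
    (hlip i) δ hδ
  classical
  let T : Finset (EuclideanSpace ℝ (Fin n) × ℝ) := Finset.univ.biUnion fun i => (c i).support
  let e := T.equivFin
  let A : Matrix (Fin T.card) (Fin n) ℝ := fun j l => (e.symm j).1.1 l
  let b : Fin T.card → ℝ := fun j => (e.symm j).1.2
  let C : Matrix (Fin m) (Fin T.card) ℝ := fun i j => c i (e.symm j).1
  have hnet : ∀ x : EuclideanSpace ℝ (Fin n), ∀ i, C.mulVec (fun i => σ ((A.mulVec x + b) i)) i
      = (c i).sum (fun q w => w * σ (inner ℝ q.1 x + q.2)) := by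
    intro x i
    rw [Finsupp.sum_of_support_subset (s := T) _
      (Finset.subset_biUnion_of_mem (fun i => (c i).support) (Finset.mem_univ i)) _ (by simp)]
    rw [← Finset.sum_coe_sort T, ← e.symm.sum_comp]
    simp only [Matrix.mulVec, dotProduct, C, A, b, Pi.add_apply]
    refine Finset.sum_congr rfl fun j _ => ?_
    congr 3
    simp [PiLp.inner_apply, mul_comm]
  refine ⟨T.card, A, b, C, fun x hx => ?_, fun x hx y hy => ?_⟩
  · refine lt_of_le_of_lt ((pi_norm_le_iff_of_nonneg hδ.le).2 fun i => ?_) hδε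
    rw [Pi.sub_apply, hnet]
    exact hc1 i x hx
  · by_cases hxy : x = y
    · subst hxy; simp
    have hn0 : 0 < n := by
      rcases Nat.eq_zero_or_pos n with h | h
      · subst h; exact absurd (Subsingleton.elim x y) hxy
      · exact h
    have hpos : 0 < ‖x - y‖ := norm_pos_iff.2 (sub_ne_zero.2 hxy)
    have hL : 0 ≤ L := by
      by_contra! h
      have := (norm_nonneg _).trans (hf x hx y hy)
      nlinarith
    have hle : (L.toNNReal : ℝ) + δ ≤ L + ε * (Real.sqrt ((n : ℝ) + (n : ℝ) / ε) / 2 + L) := by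
      rw [Real.coe_toNNReal L hL, mul_add]
      have := hδn hn0
      have := mul_nonneg hε.le hL
      linarith
    have h0 : 0 ≤ (L.toNNReal : ℝ) + δ := by positivity
    refine le_trans ?_ (mul_le_mul_of_nonneg_right hle (norm_nonneg _))
    refine (pi_norm_le_iff_of_nonneg (by positivity)).2 fun i => ?_
    rw [Pi.sub_apply, hnet, hnet]
    exact hc2 i x hx y hy
end

section
/- Let K ⊂ ℝⁿ be a compact set, let σ : ℝ → ℝ be continuously differentiable and not a polynomial, and let f : ℝⁿ → ℝ^m be continuously differentiable. Then for every ε > 0 there exist k ∈ ℕ, A ∈ ℝ^{k×n}, b ∈ ℝ^k, C ∈ ℝ^{m×k} such that the one-hidden-layer neural network φ(x) = C·σ(Ax + b) satisfies simultaneously sup_{x ∈ K} ‖f(x) − φ(x)‖ < ε and sup_{x ∈ K} ‖∂f/∂x_i(x) − ∂φ/∂x_i(x)‖ < ε for every i = 1, …, n. -/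
open MeasureTheory Filter Topology Set Function

theorem nn_integral_mem {Y B : Type*} [TopologicalSpace Y] [MeasurableSpace Y] [OpensMeasurableSpace Y]
    [NormedAddCommGroup B] [NormedSpace ℝ B] [CompleteSpace B] [SecondCountableTopology Y]
    (μ : Measure Y) [IsFiniteMeasureOnCompacts μ] (S : Submodule ℝ B)
    (hS : IsClosed (S : Set B)) (G : Y → B) (hG : Continuous G) (hc : HasCompactSupport G)
    (hm : ∀ y, G y ∈ S) : ∫ y, G y ∂μ ∈ S := by
  have : CompleteSpace S := hS.completeSpace_coe
  let G' : Y → S := fun y => ⟨G y, hm y⟩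
  have hG' : Continuous G' := hG.subtype_mk hm
  have hc' : HasCompactSupport G' := by
    refine hc.mono ?_
    intro y hy
    simp only [Function.mem_support] at hy ⊢
    intro h
    exact hy (Subtype.ext h)
  have hi : Integrable G' μ := by
    exact hG'.integrable_of_hasCompactSupport hc'
  have := S.subtypeL.integral_comp_comm hi
  have h2 : ∫ y, G y ∂μ = S.subtypeL (∫ y, G' y ∂μ) := by
    rw [← this]; rfl
  rw [h2]
  exact (∫ y, G' y ∂μ).2

theorem nn_eval {Y X V : Type*} [MeasurableSpace Y] [TopologicalSpace X] [CompactSpace X]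
    [NormedAddCommGroup V] [NormedSpace ℝ V] [CompleteSpace V] (μ : Measure Y)
    (G : Y → C(X, V)) (hG : Integrable G μ) (x : X) : (∫ y, G y ∂μ) x = ∫ y, G y x ∂μ := by
  have := (ContinuousMap.evalCLM ℝ x : C(X, V) →L[ℝ] V).integral_comp_comm hG
  exact this.symm

theorem nn_poly_of_iter (k : ℕ) : ∀ g : ℝ → ℝ, ContDiff ℝ k g → (∀ x, iteratedDeriv k g x = 0) →
    ∃ p : Polynomial ℝ, p.degree < k ∧ ∀ x, g x = p.eval x := by
  induction k with
  | zero =>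
    intro g _ h
    exact ⟨0, by simp, fun x => by simpa using h x⟩
  | succ k ih =>
    intro g hg h
    have hd : Differentiable ℝ (iteratedDeriv k g) :=
      hg.differentiable_iteratedDeriv k (by exact_mod_cast Nat.lt_succ_self k)
    have hconst : ∀ x, iteratedDeriv k g x = iteratedDeriv k g 0 := fun x =>
      is_const_of_deriv_eq_zero hd (fun y => by rw [← iteratedDeriv_succ]; exact h y) x 0
    set c := iteratedDeriv k g 0 with hc
    have hg' : ContDiff ℝ k g := hg.of_le (by exact_mod_cast Nat.le_succ k)
    obtain ⟨p, hp, hpe⟩ := ih (fun x => g x - (c / k.factorial) * x ^ k)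
      (by fun_prop) (by
        intro x
        rw [iteratedDeriv_fun_sub (by fun_prop) (by fun_prop), iteratedDeriv_const_mul_field, show (fun x : ℝ => x ^ k) = (fun x => x ^ k) from rfl, iteratedDeriv_pow, hconst]
        have : (k.factorial : ℝ) ≠ 0 := by positivity
        simp [Nat.descFactorial_self, this])
    refine ⟨p + Polynomial.C (c / k.factorial) * Polynomial.X ^ k, ?_, fun x => ?_⟩
    · refine (Polynomial.degree_add_le _ _).trans_lt (max_lt ?_ ?_)
      · exact hp.trans (by exact_mod_cast Nat.lt_succ_self k)
      · exact (Polynomial.degree_C_mul_X_pow_le _ _).trans_lt (by exact_mod_cast Nat.lt_succ_self k)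
    · have := hpe x
      simp only [Polynomial.eval_add, Polynomial.eval_mul, Polynomial.eval_C, Polynomial.eval_pow, Polynomial.eval_X, ← this]
      ring

theorem nn_poly_limit (k : ℕ) (g : ℕ → ℝ → ℝ) (s : ℝ → ℝ)
    (hg : ∀ j, ∃ p : Polynomial ℝ, p.degree < k ∧ ∀ x, g j x = p.eval x)
    (hl : ∀ x, Tendsto (fun j => g j x) atTop (𝓝 (s x))) :
    ∃ p : Polynomial ℝ, ∀ x, s x = p.eval x := by
  have hinj : Set.InjOn (fun i : ℕ => (i : ℝ)) (Finset.range k : Set ℕ) :=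
    fun a _ b _ h => Nat.cast_injective h
  have key : ∀ r : ℕ → ℝ, ∀ x, (Lagrange.interpolate (Finset.range k) (fun i : ℕ => (i : ℝ)) r).eval x
      = ∑ i ∈ Finset.range k, r i * (Lagrange.basis (Finset.range k) (fun i : ℕ => (i : ℝ)) i).eval x := by
    intro r x
    simp [Lagrange.interpolate_apply, Polynomial.eval_finsetSum]
  refine ⟨Lagrange.interpolate (Finset.range k) (fun i : ℕ => (i : ℝ)) (fun i => s i), fun x => ?_⟩
  refine tendsto_nhds_unique (hl x) ?_
  rw [key]
  have : ∀ j, g j x = ∑ i ∈ Finset.range k, g j i * (Lagrange.basis (Finset.range k) (fun i : ℕ => (i : ℝ)) i).eval x := by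
    intro j
    obtain ⟨p, hp, hpe⟩ := hg j
    rw [← key (fun i => g j i), hpe]
    congr 1
    apply Lagrange.eq_interpolate_of_eval_eq _ hinj (by simpa using hp)
    intro i _
    exact (hpe i).symm
  simp_rw [this]
  exact tendsto_finsetSum _ fun i _ => (hl i).mul_const _

theorem nn_exists_bump (σ : ℝ → ℝ) (hσ : Continuous σ)
    (hσpoly : ¬ ∃ p : Polynomial ℝ, ∀ t : ℝ, σ t = p.eval t) (k : ℕ) :
    ∃ ψ : ℝ → ℝ, Continuous ψ ∧ HasCompactSupport ψ ∧
      ContDiff ℝ (⊤ : ℕ∞) (fun s => ∫ t, ψ t * σ (s - t)) ∧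
      ∃ b, iteratedDeriv k (fun s => ∫ t, ψ t * σ (s - t)) b ≠ 0 := by
  by_contra hcon
  push Not at hcon
  apply hσpoly
  let φ : ℕ → ContDiffBump (0 : ℝ) := fun j => ⟨1 / (2 * (j + 1)), 1 / (j + 1), by positivity, by
    apply one_div_lt_one_div_of_lt <;> nlinarith [(j.cast_nonneg : (0:ℝ) ≤ j)]⟩
  have hφ : Tendsto (fun j => (φ j).rOut) atTop (𝓝 0) := tendsto_one_div_add_atTop_nhds_zero_nat
  have hsm : ∀ j, ContDiff ℝ (⊤ : ℕ∞) (fun s => ∫ t, (φ j).normed volume t * σ (s - t)) := fun j =>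
    (φ j).hasCompactSupport_normed.contDiff_convolution_left (ContinuousLinearMap.lsmul ℝ ℝ)
      (φ j).contDiff_normed hσ.locallyIntegrable
  apply nn_poly_limit k (fun j s => ∫ t, (φ j).normed volume t * σ (s - t)) σ
  · intro j
    exact nn_poly_of_iter k _ ((hsm j).of_le (by exact_mod_cast le_top))
      (hcon _ (φ j).continuous_normed (φ j).hasCompactSupport_normed (hsm j))
  · intro x
    exact ContDiffBump.convolution_tendsto_right_of_continuous hφ hσ x

theorem nn_deriv_mem {X : Type*} [TopologicalSpace X] [CompactSpace X]
    (S : Submodule ℝ C(X, ℝ)) (hS : IsClosed (S : Set C(X, ℝ)))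
    (F F' : C(ℝ, C(X, ℝ))) (hF : ∀ t x, HasDerivAt (fun t => F t x) (F' t x) t)
    (hm : ∀ t, F t ∈ S) : F' 0 ∈ S := by
  have h2 : HasDerivAt (fun t => F t) (F' 0) 0 := by
    have hint : ∀ t, F t = F 0 + ∫ u in (0:ℝ)..t, F' u := by
      intro t
      ext x
      have h3 := (ContinuousMap.evalCLM ℝ x : C(X, ℝ) →L[ℝ] ℝ).intervalIntegral_comp_comm
        (F'.continuous.intervalIntegrable (μ := volume) 0 t)
      have h4 := intervalIntegral.integral_eq_sub_of_hasDerivAt (fun u _ => hF u x)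
        (((ContinuousMap.evalCLM ℝ x : C(X, ℝ) →L[ℝ] ℝ).continuous.comp F'.continuous).intervalIntegrable (μ := volume) 0 t)
      have h5 : (∫ u in (0:ℝ)..t, F' u) x = F t x - F 0 x := by
        rw [← h4]; exact h3.symm
      simp [h5]
    rw [show (fun t => F t) = fun t => F 0 + ∫ u in (0:ℝ)..t, F' u from funext hint]
    exact (intervalIntegral.integral_hasDerivAt_right (F'.continuous.intervalIntegrable _ _)
      (F'.continuous.stronglyMeasurableAtFilter _ _) F'.continuous.continuousAt).const_add _
  refine hS.mem_of_tendsto (hasDerivAt_iff_tendsto_slope.1 h2) (Eventually.of_forall fun t => ?_)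
  simp only [slope, vsub_eq_sub]
  exact S.smul_mem _ (S.sub_mem (hm _) (hm _))

section dens
set_option linter.unusedSectionVars false
variable {E : Type*} [NormedAddCommGroup E] [InnerProductSpace ℝ E]

/-- scalar ridge function on `K` -/
def nnRidge (K : Set E) (g : ℝ → ℝ) (hg : Continuous g) (w : E) (b : ℝ) : C(K, ℝ) :=
  ⟨fun x => g (inner ℝ w (x : E) + b), by fun_prop⟩

/-- linear form on `K` -/
def nnLin (K : Set E) (a : E) : C(K, ℝ) := ⟨fun x => inner ℝ a (x : E), by fun_prop⟩

/-- closed span of ridge functions -/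
def nnS0 (K : Set E) (σ : ℝ → ℝ) (hσ : Continuous σ) : Submodule ℝ C(K, ℝ) :=
  (Submodule.span ℝ {h | ∃ w b, h = nnRidge K σ hσ w b}).topologicalClosure

variable (K : Set E) [CompactSpace K] (σ : ℝ → ℝ) (hσ : Continuous σ)

theorem nnS0_closed : IsClosed (nnS0 K σ hσ : Set C(K, ℝ)) :=
  Submodule.isClosed_topologicalClosure _

theorem nnRidge_mem (w : E) (b : ℝ) : nnRidge K σ hσ w b ∈ nnS0 K σ hσ :=
  Submodule.le_topologicalClosure _ (Submodule.subset_span ⟨w, b, rfl⟩)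

theorem nn_conv_mem (ψ : ℝ → ℝ) (hψ : Continuous ψ) (hc : HasCompactSupport ψ)
    (hg : Continuous (fun s => ∫ t, ψ t * σ (s - t))) (w : E) (b : ℝ) :
    nnRidge K _ hg w b ∈ nnS0 K σ hσ := by
  let F : C(ℝ, C(K, ℝ)) := ContinuousMap.curry
    ⟨fun p : ℝ × K => ψ p.1 * σ (inner ℝ w (p.2 : E) + b - p.1), by fun_prop⟩
  have hF : ∀ t, F t = ψ t • nnRidge K σ hσ w (b - t) := by
    intro t
    ext x
    simp [F, nnRidge, add_sub_assoc]
  have hcF : HasCompactSupport (fun t => F t) := by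
    refine hc.mono ?_
    intro t ht h0
    apply ht
    change F t = 0
    rw [hF, h0, zero_smul]
  have h1 := nn_integral_mem volume (nnS0 K σ hσ) (nnS0_closed K σ hσ) (fun t => F t) F.continuous hcF
    (fun t => by rw [hF]; exact Submodule.smul_mem _ _ (nnRidge_mem K σ hσ _ _))
  convert h1 using 1
  ext x
  rw [nn_eval _ _ (F.continuous.integrable_of_hasCompactSupport hcF)]
  simp [F, nnRidge]

theorem nn_mono_mem (g : ℝ → ℝ) (hg : ContDiff ℝ (⊤ : ℕ∞) g)
    (hm : ∀ (w : E) (b : ℝ), nnRidge K g hg.continuous w b ∈ nnS0 K σ hσ) (L : List E) :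
    ∀ (w : E) (b : ℝ), (L.map (nnLin K)).prod *
      nnRidge K (iteratedDeriv L.length g)
        (hg.continuous_iteratedDeriv _ (by exact_mod_cast le_top)) w b ∈ nnS0 K σ hσ := by
  induction L with
  | nil =>
    intro w b
    simpa using hm w b
  | cons a L ih =>
    intro w b
    have hc : ∀ j, Continuous (iteratedDeriv j g) := fun j =>
      hg.continuous_iteratedDeriv j (by exact_mod_cast le_top)
    have hd : Differentiable ℝ (iteratedDeriv L.length g) :=
      hg.differentiable_iteratedDeriv _ (by exact_mod_cast ENat.natCast_lt_top _)
    have c1 := hc L.length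
    have c2 := hc (L.length + 1)
    let P : C(K, ℝ) := (L.map (nnLin K)).prod
    let F : C(ℝ, C(K, ℝ)) := ContinuousMap.curry
      ⟨fun p : ℝ × K => P p.2 * iteratedDeriv L.length g (inner ℝ (w + p.1 • a) (p.2 : E) + b), by fun_prop⟩
    let F' : C(ℝ, C(K, ℝ)) := ContinuousMap.curry
      ⟨fun p : ℝ × K => P p.2 * (iteratedDeriv (L.length + 1) g (inner ℝ (w + p.1 • a) (p.2 : E) + b) *
        inner ℝ a (p.2 : E)), by fun_prop⟩
    have h := nn_deriv_mem (nnS0 K σ hσ) (nnS0_closed K σ hσ) F F' (fun t x => by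
        change HasDerivAt (fun t : ℝ => P x * iteratedDeriv L.length g (inner ℝ (w + t • a) (x : E) + b))
          (P x * (iteratedDeriv (L.length + 1) g (inner ℝ (w + t • a) (x : E) + b) * inner ℝ a (x : E))) t
        apply HasDerivAt.const_mul
        have h1 : HasDerivAt (fun t : ℝ => inner ℝ (w + t • a) (x : E) + b) (inner ℝ a (x : E)) t := by
          simp only [inner_add_left, real_inner_smul_left]
          simpa using (((hasDerivAt_id t).mul_const (inner ℝ a (x : E))).const_add (inner ℝ w (x : E))).add_const b
        have h2 := (hd (inner ℝ (w + t • a) (x : E) + b)).hasDerivAt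
        rw [← iteratedDeriv_succ] at h2
        exact h2.comp t h1) (fun t => ih (w + t • a) b)
    convert h using 1
    ext x
    simp [F', P, nnRidge, nnLin]
    ring

theorem nn_density (hσpoly : ¬ ∃ p : Polynomial ℝ, ∀ t : ℝ, σ t = p.eval t) :
    nnS0 K σ hσ = ⊤ := by
  have h1 : ∀ L : List E, (L.map (nnLin K)).prod ∈ nnS0 K σ hσ := by
    intro L
    obtain ⟨ψ, hψ, hψc, hsm, b, hb⟩ := nn_exists_bump σ hσ hσpoly L.length
    have h := nn_mono_mem K σ hσ _ hsm (nn_conv_mem K σ hσ ψ hψ hψc hsm.continuous) L 0 b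
    have h2 := Submodule.smul_mem _ (iteratedDeriv L.length (fun s => ∫ t, ψ t * σ (s - t)) b)⁻¹ h
    convert h2 using 1
    ext x
    simp only [ContinuousMap.smul_apply, ContinuousMap.mul_apply, nnRidge, ContinuousMap.coe_mk, inner_zero_left, zero_add, smul_eq_mul]
    field_simp
  let A : Subalgebra ℝ C(K, ℝ) := Algebra.adjoin ℝ (Set.range (nnLin K))
  have hA : Subalgebra.toSubmodule A ≤ nnS0 K σ hσ := by
    rw [Algebra.adjoin_eq_span, Submodule.span_le]
    intro P hP
    obtain ⟨l, hl, rfl⟩ := Submonoid.exists_list_of_mem_closure hP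
    obtain ⟨L, rfl⟩ : ∃ L : List E, L.map (nnLin K) = l := by
      have : l ∈ Set.range (List.map (nnLin K)) := by
        rw [Set.range_list_map]; exact hl
      exact this
    exact h1 L
  have hsep : A.SeparatesPoints := by
    intro x y hxy
    refine ⟨_, ⟨nnLin K ((x : E) - y), Algebra.subset_adjoin ⟨_, rfl⟩, rfl⟩, ?_⟩
    intro h
    simp only [nnLin, ContinuousMap.coe_mk] at h
    have : inner ℝ ((x : E) - y) ((x : E) - y) = 0 := by
      rw [inner_sub_right, h, sub_self]
    rw [inner_self_eq_zero, sub_eq_zero] at this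
    exact hxy (Subtype.ext this)
  have htop := ContinuousMap.subalgebra_topologicalClosure_eq_top_of_separatesPoints A hsep
  rw [eq_top_iff]
  intro h _
  have hh : h ∈ A.topologicalClosure := by rw [htop]; trivial
  exact closure_minimal (s := (A : Set C(K, ℝ))) hA (nnS0_closed K σ hσ) hh

end dens

section cone
set_option linter.unusedSectionVars false
variable {E F ι : Type*} [Fintype ι] [NormedAddCommGroup E] [InnerProductSpace ℝ E] [FiniteDimensional ℝ E]
  [MeasurableSpace E] [BorelSpace E] (e : ι → E)
  [NormedAddCommGroup F] [NormedSpace ℝ F] [CompleteSpace F]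

/-- value and derivative of a vector-valued ridge function -/
noncomputable def nnJ (F : Type*) [NormedAddCommGroup F] [NormedSpace ℝ F]
    (K : Set E) (σ : ℝ → ℝ) (hσ : ContDiff ℝ 1 σ) (a : E) (b : ℝ) (v : F) :
    C(K, F × (ι → F)) :=
  ⟨fun x => (σ (inner ℝ a (x : E) + b) • v,
    fun i => deriv σ (inner ℝ a (x : E) + b) • (inner ℝ a (e i) • v)), by
    have h1 := hσ.continuous
    have h2 := hσ.continuous_deriv le_rfl
    fun_prop⟩

/-- closed span -/
noncomputable def nnS1 (F : Type*) [NormedAddCommGroup F] [NormedSpace ℝ F]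
    (K : Set E) (σ : ℝ → ℝ) (hσ : ContDiff ℝ 1 σ) : Submodule ℝ C(K, F × (ι → F)) :=
  (Submodule.span ℝ {h | ∃ a b v, h = nnJ e F K σ hσ a b v}).topologicalClosure

/-- translated jets -/
noncomputable def nnG (K : Set E) (f : E → F) (hf : ContDiff ℝ 1 f) : C(E, C(K, F × (ι → F))) :=
  ContinuousMap.curry ⟨fun p : E × K => (f ((p.2 : E) + p.1), fun i => fderiv ℝ f ((p.2 : E) + p.1) (e i)), by
    have h1 := hf.continuous
    have h2 := hf.continuous_fderiv one_ne_zero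
    fun_prop⟩

variable (K : Set E) [CompactSpace K] (σ : ℝ → ℝ) (hσ : ContDiff ℝ 1 σ)
  (f : E → F) (hf : ContDiff ℝ 1 f) (hc : HasCompactSupport f)

include hc in
theorem nnG_compact : HasCompactSupport (fun y => nnG e K f hf y) := by
  have hK : IsCompact K := isCompact_iff_compactSpace.2 inferInstance
  refine HasCompactSupport.intro (IsCompact.add (show IsCompact (tsupport f) from hc) hK.neg) ?_
  intro y hy
  have hz : ∀ x : K, (x : E) + y ∉ tsupport f := by
    intro x hx
    exact hy ⟨_, hx, -(x : E), by simp, by simp⟩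
  ext1 x
  change (f (x + y), fun i => fderiv ℝ f (x + y) (e i)) = 0
  rw [image_eq_zero_of_notMem_tsupport (hz x), 
    image_eq_zero_of_notMem_tsupport (fun h => hz x (tsupport_fderiv_subset ℝ h))]
  rfl

include hσ hf hc in
theorem nn_ibp (a : E) (b : ℝ) (x v : E) : ∫ t, σ (inner ℝ a t + b) • fderiv ℝ f (x + -t) v =
      ∫ y, deriv σ (inner ℝ a (x : E) + (b - inner ℝ a y)) • (inner ℝ a v • f y) := by
    have cσ := hσ.continuous
    have cσ' := hσ.continuous_deriv le_rfl
    have cf := hf.continuous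
    have cf' := hf.continuous_fderiv one_ne_zero
    rw [← integral_sub_left_eq_self _ volume (x : E)]
    let u : E → ℝ := fun y => σ (inner ℝ a (x : E) + (b - inner ℝ a y))
    have hu : ∀ y, HasFDerivAt u (deriv σ (inner ℝ a (x : E) + (b - inner ℝ a y)) • (-innerSL ℝ a)) y := by
      intro y
      have h2 := ((hσ.differentiable one_ne_zero) (inner ℝ a (x : E) + (b - inner ℝ a y))).hasDerivAt
      refine h2.comp_hasFDerivAt y ?_
      exact (((innerSL ℝ a).hasFDerivAt (x := y)).const_sub b).const_add _
    have huc : Continuous u := by fun_prop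
    have hfu : ∀ y v, fderiv ℝ u y v = - (deriv σ (inner ℝ a (x : E) + (b - inner ℝ a y)) * inner ℝ a v) := by
      intro y v
      rw [(hu y).fderiv]; simp
    have hcfv : HasCompactSupport (fun y => fderiv ℝ f y v) := by
      refine (hc.fderiv ℝ).mono ?_
      intro y hy h0
      apply hy
      simp [h0]
    have key := integral_smul_fderiv_eq_neg_fderiv_smul_of_integrable (μ := volume) (f := u) (g := f) (v := v)
      (by
        simp only [hfu]
        refine Continuous.integrable_of_hasCompactSupport (by fun_prop) ?_
        exact hc.smul_left)
      (by
        refine Continuous.integrable_of_hasCompactSupport (by fun_prop) ?_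
        exact hcfv.smul_left)
      (by
        refine Continuous.integrable_of_hasCompactSupport (by fun_prop) ?_
        exact hc.smul_left)
      (fun y _ => (hu y).differentiableAt)
      (fun y _ => (hf.differentiable one_ne_zero) y)
    rw [← integral_neg] at key
    convert key using 2
    · ext y
      simp only [inner_sub_right, neg_sub, add_sub_cancel, u]
      congr 2; ring
    · ext y
      rw [hfu, smul_smul, neg_smul, neg_neg]

/-- ridge jets weighted by `f` -/
noncomputable def nnH (a : E) (b : ℝ) : C(E, C(K, F × (ι → F))) := ContinuousMap.curry
    ⟨fun p : E × K => (σ (inner ℝ a (p.2 : E) + (b - inner ℝ a p.1)) • f p.1,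
      fun i => deriv σ (inner ℝ a (p.2 : E) + (b - inner ℝ a p.1)) • (inner ℝ a (e i) • f p.1)), by
      have cσ := hσ.continuous
      have cσ' := hσ.continuous_deriv le_rfl
      have cf := hf.continuous
      fun_prop⟩

theorem nnH_eq (a : E) (b : ℝ) (y : E) :
    nnH e K σ hσ f hf a b y = nnJ e F K σ hσ a (b - inner ℝ a y) (f y) := rfl

include hc in
theorem nnH_compact (a : E) (b : ℝ) : HasCompactSupport (fun y => nnH e K σ hσ f hf a b y) := by
  refine hc.mono ?_
  intro y hy h0
  apply hy
  change nnH e K σ hσ f hf a b y = 0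
  rw [nnH_eq, h0]
  ext1 x
  simp [nnJ]
  rfl

include hc in
theorem nnH_mem (a : E) (b : ℝ) : ∫ y, nnH e K σ hσ f hf a b y ∈ nnS1 e F K σ hσ :=
  nn_integral_mem volume (nnS1 e F K σ hσ) (Submodule.isClosed_topologicalClosure _)
    (fun y => nnH e K σ hσ f hf a b y) (nnH e K σ hσ f hf a b).continuous
    (nnH_compact e K σ hσ f hf hc a b)
    (fun y => Submodule.le_topologicalClosure _ (Submodule.subset_span ⟨a, _, _, nnH_eq e K σ hσ f hf a b y⟩))

theorem nn_eval1 (G : E → C(K, F × (ι → F))) (hG : Integrable G) (x : K) :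
    ((∫ y, G y) x).1 = ∫ y, (G y x).1 := by
  rw [nn_eval _ _ hG]
  exact fst_integral ((ContinuousMap.evalCLM ℝ x : C(K, F × (ι → F)) →L[ℝ] _).integrable_comp hG)

theorem nn_eval2 (G : E → C(K, F × (ι → F))) (hG : Integrable G) (x : K) (i : ι) :
    ((∫ y, G y) x).2 i = ∫ y, (G y x).2 i := by
  have h1 : Integrable (fun y => G y x) :=
    (ContinuousMap.evalCLM ℝ x : C(K, F × (ι → F)) →L[ℝ] _).integrable_comp hG
  rw [nn_eval _ _ hG, snd_integral h1]
  exact eval_integral (fun j =>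
      (ContinuousLinearMap.proj (R := ℝ) (φ := fun _ : ι => F) j).integrable_comp h1.snd) i

include hc in
theorem nn_ridge_int (a : E) (b : ℝ) :
    ∫ t, σ (inner ℝ a t + b) • nnG e K f hf (-t) ∈ nnS1 e F K σ hσ := by
  have cσ := hσ.continuous
  have cG : Continuous (fun t => σ (inner ℝ a t + b) • nnG e K f hf (-t)) := by fun_prop
  have hcG : HasCompactSupport (fun t => σ (inner ℝ a t + b) • nnG e K f hf (-t)) := by
    have h1 : HasCompactSupport (fun t => nnG e K f hf (-t)) :=
      (nnG_compact e K f hf hc).comp_homeomorph (Homeomorph.neg E)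
    refine h1.mono ?_
    intro t ht h0
    apply ht
    change σ (inner ℝ a t + b) • nnG e K f hf (-t) = 0
    rw [show nnG e K f hf (-t) = 0 from h0, smul_zero]
  have iG := cG.integrable_of_hasCompactSupport (μ := volume) hcG
  have iH := (nnH e K σ hσ f hf a b).continuous.integrable_of_hasCompactSupport (μ := volume)
    (nnH_compact e K σ hσ f hf hc a b)
  have heq : ∫ t, σ (inner ℝ a t + b) • nnG e K f hf (-t) = ∫ y, nnH e K σ hσ f hf a b y := by
    ext1 x
    refine Prod.ext ?_ (funext fun i => ?_)
    · rw [nn_eval1 K _ iG, nn_eval1 K _ iH]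
      change ∫ t, σ (inner ℝ a t + b) • f (x + -t) =
        ∫ y, σ (inner ℝ a (x : E) + (b - inner ℝ a y)) • f y
      rw [← integral_sub_left_eq_self _ volume (x : E)]
      congr 1
      ext y
      simp only [inner_sub_right, neg_sub, add_sub_cancel]
      congr 2; ring
    · rw [nn_eval2 K _ iG, nn_eval2 K _ iH]
      exact nn_ibp σ hσ f hf hc a b x (e i)
  rw [heq]
  exact nnH_mem e K σ hσ f hf hc a b

include hc in
theorem nn_cont_int (hσpoly : ¬ ∃ p : Polynomial ℝ, ∀ t : ℝ, σ t = p.eval t)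
    (h : E → ℝ) (hh : Continuous h) :
    ∫ t, h t • nnG e K f hf (-t) ∈ nnS1 e F K σ hσ := by
  have hcG : HasCompactSupport (fun t => nnG e K f hf (-t)) :=
    (nnG_compact e K f hf hc).comp_homeomorph (Homeomorph.neg E)
  have cG : Continuous (fun t => nnG e K f hf (-t)) := by fun_prop
  let B : Set E := tsupport (fun t => nnG e K f hf (-t))
  have hB : IsCompact B := hcG
  have : CompactSpace B := isCompact_iff_compactSpace.1 hB
  have hmB : MeasurableSet B := hB.measurableSet
  have iG : Integrable (fun t : B => nnG e K f hf (-t)) (volume.comap Subtype.val) := by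
    have := (cG.integrable_of_hasCompactSupport (μ := volume) hcG).integrableOn (s := B)
    exact (integrableOn_iff_comap_subtypeVal hmB).1 this
  have iU : ∀ u : C(B, ℝ), Integrable (fun t : B => u t • nnG e K f hf (-t)) (volume.comap Subtype.val) := by
    intro u
    refine iG.bdd_smul ‖u‖ u.continuous.aestronglyMeasurable (Eventually.of_forall fun t => u.norm_coe_le_norm t)
  let Λ : C(B, ℝ) →L[ℝ] C(K, F × (ι → F)) := LinearMap.mkContinuous
    { toFun := fun u => ∫ t : B, u t • nnG e K f hf (-t) ∂(volume.comap Subtype.val)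
      map_add' := fun u w => by
        simp only [ContinuousMap.add_apply, add_smul]
        exact integral_add (iU u) (iU w)
      map_smul' := fun c u => by
        simp only [ContinuousMap.smul_apply, smul_assoc]
        exact integral_smul c _ }
    (∫ t : B, ‖nnG e K f hf (-t)‖ ∂(volume.comap Subtype.val)) (fun u => by
      change ‖∫ t : B, u t • nnG e K f hf (-t) ∂(volume.comap Subtype.val)‖ ≤ _
      rw [mul_comm, ← integral_const_mul]
      refine norm_integral_le_of_norm_le (iG.norm.const_mul _) (Eventually.of_forall fun t => ?_)
      rw [norm_smul]
      gcongr
      exact u.norm_coe_le_norm t)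
  have hΛ : ∀ w : E → ℝ, ∀ hw : Continuous w, Λ ⟨fun t : B => w t, by fun_prop⟩ = 
      ∫ t, w t • nnG e K f hf (-t) := by
    intro w hw
    change ∫ t : B, w t • nnG e K f hf (-t) ∂(volume.comap Subtype.val) = _
    rw [integral_subtype_comap hmB (fun t => w t • nnG e K f hf (-t))]
    apply setIntegral_eq_integral_of_forall_compl_eq_zero
    intro t ht
    have : nnG e K f hf (-t) = 0 := image_eq_zero_of_notMem_tsupport (f := fun t => nnG e K f hf (-t)) ht
    rw [this, smul_zero]
  rw [← hΛ h hh]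
  have hle : nnS0 B σ hσ.continuous ≤ (nnS1 e F K σ hσ).comap Λ.toLinearMap := by
    refine Submodule.topologicalClosure_minimal _ ?_ ?_
    · rw [Submodule.span_le]
      rintro _ ⟨w, b, rfl⟩
      change Λ (nnRidge B σ _ w b) ∈ nnS1 e F K σ hσ
      have := hΛ (fun t => σ (inner ℝ w t + b)) (by have := hσ.continuous; fun_prop)
      have h3 : Λ (nnRidge B σ hσ.continuous w b) = _ := this
      rw [h3]
      exact nn_ridge_int e K σ hσ f hf hc w b
    · exact (Submodule.isClosed_topologicalClosure _).preimage Λ.continuous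
  rw [nn_density B σ hσ.continuous hσpoly] at hle
  exact hle trivial

include hc in
theorem nn_c1 (hσpoly : ¬ ∃ p : Polynomial ℝ, ∀ t : ℝ, σ t = p.eval t) :
    nnG e K f hf 0 ∈ nnS1 e F K σ hσ := by
  let φ : ℕ → ContDiffBump (0 : E) := fun j => ⟨1 / (2 * (j + 1)), 1 / (j + 1), by positivity, by
    apply one_div_lt_one_div_of_lt <;> nlinarith [(j.cast_nonneg : (0:ℝ) ≤ j)]⟩
  have hφ : Tendsto (fun j => (φ j).rOut) atTop (𝓝 0) := tendsto_one_div_add_atTop_nhds_zero_nat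
  have h1 := ContDiffBump.convolution_tendsto_right_of_continuous (μ := volume) hφ (nnG e K f hf).continuous 0
  refine (Submodule.isClosed_topologicalClosure _).mem_of_tendsto h1 (Eventually.of_forall fun j => ?_)
  have h2 := nn_cont_int e K σ hσ f hf hc hσpoly ((φ j).normed volume) (φ j).continuous_normed
  have h3 : convolution ((φ j).normed volume) (⇑(nnG e K f hf)) (ContinuousLinearMap.lsmul ℝ ℝ) volume 0
      = ∫ t, (φ j).normed volume t • nnG e K f hf (-t) := by
    simp [convolution_def]
  rw [h3]
  exact h2

end cone

theorem nn_fderiv_ridge {E F : Type*} [NormedAddCommGroup E] [InnerProductSpace ℝ E]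
    [NormedAddCommGroup F] [NormedSpace ℝ F] (σ : ℝ → ℝ) (hσ : ContDiff ℝ 1 σ)
    (k : ℕ) (c : Fin k → ℝ) (a : Fin k → E) (b : Fin k → ℝ) (v : Fin k → F) (x u : E) :
    fderiv ℝ (fun x => ∑ i, c i • (σ (inner ℝ (a i) x + b i) • v i)) x u =
      ∑ i, c i • (deriv σ (inner ℝ (a i) x + b i) • (inner ℝ (a i) u • v i)) := by
  have h : ∀ i, HasFDerivAt (fun x => c i • (σ (inner ℝ (a i) x + b i) • v i))
      (c i • (deriv σ (inner ℝ (a i) x + b i) • innerSL ℝ (a i)).smulRight (v i)) x := by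
    intro i
    have h2 := ((hσ.differentiable one_ne_zero) (inner ℝ (a i) x + b i)).hasDerivAt
    have h3 : HasFDerivAt (fun x => σ (inner ℝ (a i) x + b i))
      (deriv σ (inner ℝ (a i) x + b i) • innerSL ℝ (a i)) x :=
      h2.comp_hasFDerivAt x (((innerSL ℝ (a i)).hasFDerivAt (x := x)).add_const (b i))
    exact (h3.smul_const (v i)).const_smul (c i)
  rw [(HasFDerivAt.fun_sum (fun i _ => h i)).fderiv]
  simp [smul_smul]


/-- Simultaneous approximation of a continuously differentiable function and all of
its partial derivatives on a compact set by a one-hidden-layer neural network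
`φ(x) = C·σ(Ax + b)`.  The `i`-th partial derivative of `g` at `x` is
`fderiv ℝ g x (EuclideanSpace.single i 1)`. -/
theorem stmt_2 (n m : ℕ) (K : Set (EuclideanSpace ℝ (Fin n))) (hK : IsCompact K)
    (σ : ℝ → ℝ) (hσ : ContDiff ℝ 1 σ)
    (hσpoly : ¬ ∃ p : Polynomial ℝ, ∀ t : ℝ, σ t = p.eval t)
    (f : EuclideanSpace ℝ (Fin n) → EuclideanSpace ℝ (Fin m)) (hf : ContDiff ℝ 1 f)
    (ε : ℝ) (hε : 0 < ε) :
    ∃ (k : ℕ) (A : Matrix (Fin k) (Fin n) ℝ) (b : Fin k → ℝ) (C : Matrix (Fin m) (Fin k) ℝ),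
      ∃ φ : EuclideanSpace ℝ (Fin n) → EuclideanSpace ℝ (Fin m),
        (∀ x, φ x = C.mulVec (fun i => σ ((A.mulVec x + b) i))) ∧
        (∀ x ∈ K, ‖f x - φ x‖ < ε) ∧
        (∀ i : Fin n, ∀ x ∈ K,
          ‖fderiv ℝ f x (EuclideanSpace.single i 1) -
              fderiv ℝ φ x (EuclideanSpace.single i 1)‖ < ε) := by
  have : CompactSpace K := isCompact_iff_compactSpace.1 hK
  let e : Fin n → EuclideanSpace ℝ (Fin n) := fun i => EuclideanSpace.single i 1
  obtain ⟨R, hR⟩ := hK.isBounded.subset_closedBall 0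
  let χ : ContDiffBump (0 : EuclideanSpace ℝ (Fin n)) :=
    ⟨max R 0 + 1, max R 0 + 2, by positivity, by linarith⟩
  let f' : EuclideanSpace ℝ (Fin n) → EuclideanSpace ℝ (Fin m) := fun x => χ x • f x
  have hf' : ContDiff ℝ 1 f' := χ.contDiff.smul hf
  have hc' : HasCompactSupport f' := χ.hasCompactSupport.smul_right
  have hev : ∀ x ∈ K, f' =ᶠ[𝓝 x] f := by
    intro x hx
    have h1 : x ∈ Metric.ball (0 : EuclideanSpace ℝ (Fin n)) χ.rIn := by
      have := hR hx
      simp only [Metric.mem_closedBall, Metric.mem_ball] at this ⊢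
      exact this.trans_lt ((le_max_left R 0).trans_lt (lt_add_one _))
    filter_upwards [Metric.isOpen_ball.mem_nhds h1] with y hy
    simp only [f']
    rw [χ.one_of_mem_closedBall (Metric.ball_subset_closedBall hy), one_smul]
  have hmem := nn_c1 e K σ hσ f' hf' hc' hσpoly
  obtain ⟨h, hh, hd⟩ := Metric.mem_closure_iff.1 hmem ε hε
  obtain ⟨k, c, g, hg⟩ := Submodule.mem_span_set'.1 hh
  choose a b v hab using fun i => (g i).2
  have hx : ∀ x : K, h x = (∑ i, c i • (σ (inner ℝ (a i) (x : EuclideanSpace ℝ (Fin n)) + b i) • v i),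
      fun j => ∑ i, c i • (deriv σ (inner ℝ (a i) (x : EuclideanSpace ℝ (Fin n)) + b i) •
        (inner ℝ (a i) (e j) • v i))) := by
    intro x
    rw [← hg]
    simp only [hab]
    refine Prod.ext ?_ (funext fun j => ?_)
    · simp [nnJ, ContinuousMap.sum_apply, Prod.fst_sum]
    · simp [nnJ, ContinuousMap.sum_apply, Prod.snd_sum, Finset.sum_apply]
  let φ : EuclideanSpace ℝ (Fin n) → EuclideanSpace ℝ (Fin m) :=
    fun x => ∑ i, c i • (σ (inner ℝ (a i) x + b i) • v i)
  have hb : ∀ x : K, ‖nnG e K f' hf' 0 x - h x‖ < ε := fun x => by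
    rw [← dist_eq_norm]
    exact (ContinuousMap.dist_apply_le_dist x).trans_lt hd
  refine ⟨k, Matrix.of fun i j => a i j, b, Matrix.of fun j i => c i * v i j, φ, ?_, ?_, ?_⟩
  · intro x
    ext j
    simp only [φ, Matrix.mulVec, dotProduct, Matrix.of_apply, Pi.add_apply, PiLp.inner_apply,
      WithLp.ofLp_sum, Finset.sum_apply, WithLp.ofLp_smul, Pi.smul_apply, smul_eq_mul]
    refine Finset.sum_congr rfl fun i _ => ?_
    have : ∑ l, inner ℝ ((a i).ofLp l) (x.ofLp l) = ∑ l, (a i).ofLp l * x.ofLp l :=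
      Finset.sum_congr rfl fun l _ => by simp [mul_comm]
    rw [this]
    ring
  · intro x hxK
    have h1 := (norm_fst_le _).trans_lt (hb ⟨x, hxK⟩)
    rw [hx] at h1
    have h2 : f' (x + 0) = f x := by rw [add_zero]; exact (hev x hxK).eq_of_nhds
    rw [← h2]
    exact h1
  · intro j x hxK
    have h1 := (norm_le_pi_norm _ j).trans_lt ((norm_snd_le _).trans_lt (hb ⟨x, hxK⟩))
    rw [hx] at h1
    have h2 : fderiv ℝ f' (x + 0) = fderiv ℝ f x := by rw [add_zero]; exact (hev x hxK).fderiv_eq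
    rw [← h2, nn_fderiv_ridge σ hσ]
    exact h1
end

section
/- Let f : ℝⁿ → ℝⁿ be continuous, let K ⊂ ℝⁿ be compact, let A ⊆ K, and let V : ℝⁿ → ℝ be continuously differentiable with V(y) > 0 and ∇V(y)·f(y) < −δ/2 for all y ∈ K \ A, where δ > 0. Then every solution x : [0, ∞) → ℝⁿ of ẋ = f(x) that satisfies x(t) ∈ K for all t ≥ 0 must enter A in finite time: there exists T ≥ 0 with x(T) ∈ A. -/
open scoped RealInnerProductSpace

/-- If `V(y) > 0` and `∇V(y)·f(y) < −δ/2` on `K \ A` with `K` compact and `δ > 0`,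
then every solution of `ẋ = f(x)` that remains in `K` for all `t ≥ 0` must enter `A` in finite
time. -/
theorem stmt_9 (n : ℕ) (f : EuclideanSpace ℝ (Fin n) → EuclideanSpace ℝ (Fin n))
    (hf : Continuous f) (K A : Set (EuclideanSpace ℝ (Fin n)))
    (hK : IsCompact K) (hAK : A ⊆ K)
    (V : EuclideanSpace ℝ (Fin n) → ℝ) (hV : ContDiff ℝ 1 V)
    (δ : ℝ) (hδ : 0 < δ)
    (hVpos : ∀ y ∈ K \ A, 0 < V y)
    (hlie : ∀ y ∈ K \ A, ⟪gradient V y, f y⟫ < -δ / 2)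
    (x : ℝ → EuclideanSpace ℝ (Fin n))
    (hsol : ∀ t : ℝ, 0 ≤ t → HasDerivAt x (f (x t)) t)
    (hinK : ∀ t : ℝ, 0 ≤ t → x t ∈ K) :
    ∃ T : ℝ, 0 ≤ T ∧ x T ∈ A := by
  by_contra! hcon
  have hKA : ∀ t : ℝ, 0 ≤ t → x t ∈ K \ A := fun t ht => ⟨hinK t ht, hcon t ht⟩
  have hd : ∀ t : ℝ, 0 ≤ t →
      HasDerivAt (fun s => V (x s)) (⟪gradient V (x t), f (x t)⟫) t := by
    intro t ht
    have h1 : HasFDerivAt V (fderiv ℝ V (x t)) (x t) :=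
      ((hV.differentiable one_ne_zero) (x t)).hasFDerivAt
    have h2 := h1.comp_hasDerivAt t (hsol t ht)
    have h6 : ⟪gradient V (x t), f (x t)⟫ = fderiv ℝ V (x t) (f (x t)) := by
      simp [gradient]
    rw [h6]
    exact h2
  have h0 := hVpos _ (hKA 0 le_rfl)
  have hT : 0 < 2 * V (x 0) / δ := by positivity
  obtain ⟨c, hc, hc'⟩ := exists_hasDerivAt_eq_slope (fun s => V (x s))
    (fun t => ⟪gradient V (x t), f (x t)⟫) hT
    (fun t ht => (hd t ht.1).continuousAt.continuousWithinAt)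
    (fun t ht => hd t ht.1.le)
  have h3 := hlie _ (hKA c hc.1.le)
  have h4 := hVpos _ (hKA _ hT.le)
  simp only [sub_zero] at hc'
  rw [hc', div_lt_iff₀ hT] at h3
  have h5 : -δ / 2 * (2 * V (x 0) / δ) = - V (x 0) := by field_simp
  rw [h5] at h3
  linarith
end

section
/- (Uniform stability part of the Lyapunov sufficient condition for UAS.) Let A ⊂ ℝⁿ be a compact set, let D ⊆ ℝⁿ be an open set containing A, let f : ℝⁿ → ℝⁿ be continuous, and let V : D → ℝ be continuously differentiable with V(x) = 0 for all x ∈ A, V(x) > 0 for all x ∈ D \ A, and ∇V(x)·f(x) < 0 for all x ∈ D \ A. Then for every ε > 0 such that the closed ε-neighborhood of A is contained in D, there exists δ > 0 such that every solution x : [0, ∞) → ℝⁿ of ẋ = f(x) with dist(x(0), A) < δ satisfies dist(x(t), A) < ε for all t ≥ 0. -/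
open scoped RealInnerProductSpace

/-- uniform stability part of the Lyapunov sufficient condition for UAS:
if `V` is a Lyapunov function for the compact set `A` on the open set `D ⊇ A`, then for every
`ε > 0` whose closed `ε`-neighborhood of `A` lies in `D` there is `δ > 0` such that every solution
of `ẋ = f(x)` starting within distance `δ` of `A` stays within distance `ε` of `A` for all
`t ≥ 0`. -/
theorem stmt_10 (n : ℕ) (A D : Set (EuclideanSpace ℝ (Fin n)))
    (hA : IsCompact A) (hD : IsOpen D) (hAD : A ⊆ D)
    (f : EuclideanSpace ℝ (Fin n) → EuclideanSpace ℝ (Fin n)) (hf : Continuous f)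
    (V : EuclideanSpace ℝ (Fin n) → ℝ) (hV : ContDiffOn ℝ 1 V D)
    (hV0 : ∀ x ∈ A, V x = 0)
    (hVpos : ∀ x ∈ D \ A, 0 < V x)
    (hlie : ∀ x ∈ D \ A, ⟪gradient V x, f x⟫ < 0) :
    ∀ ε : ℝ, 0 < ε → Metric.cthickening ε A ⊆ D →
      ∃ δ : ℝ, 0 < δ ∧
        ∀ x : ℝ → EuclideanSpace ℝ (Fin n),
          (∀ t : ℝ, 0 ≤ t → HasDerivAt x (f (x t)) t) →
          Metric.infDist (x 0) A < δ →
          ∀ t : ℝ, 0 ≤ t → Metric.infDist (x t) A < ε := by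
  intro ε hε hcth
  rcases A.eq_empty_or_nonempty with rfl | hne
  · exact ⟨1, one_pos, fun x _ _ t _ => by simpa using hε⟩
  have hdc : Continuous (fun y => Metric.infDist y A) := Metric.continuous_infDist_pt A
  have hmem : ∀ y, Metric.infDist y A ≤ ε → y ∈ D := by
    intro y hy
    apply hcth
    rw [Metric.cthickening_eq_preimage_infEDist]
    simp only [Set.mem_preimage, Set.mem_Iic]
    rw [ENNReal.le_ofReal_iff_toReal_le (Metric.infEDist_ne_top hne) hε.le]
    exact hy
  have hnn : ∀ y ∈ D, 0 ≤ V y := by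
    intro y hy
    by_cases h : y ∈ A
    · exact (hV0 y h).ge
    · exact (hVpos y ⟨hy, h⟩).le
  have hdiff : ∀ y ∈ D, DifferentiableAt ℝ V y := fun y hy =>
    (hV.differentiableOn one_ne_zero).differentiableAt (hD.mem_nhds hy)
  have hlie' : ∀ y ∈ D, fderiv ℝ V y (f y) ≤ 0 := by
    intro y hy
    by_cases h : y ∈ A
    · have hmin : IsLocalMin V y := by
        filter_upwards [hD.mem_nhds hy] with z hz
        rw [hV0 y h]
        exact hnn z hz
      rw [hmin.fderiv_eq_zero]
      simp
    · have := hlie y ⟨hy, h⟩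
      rw [gradient, InnerProductSpace.toDual_symm_apply] at this
      exact this.le
  have hS : IsCompact {y | Metric.infDist y A = ε} := by
    refine (hA.cthickening (r := ε)).of_isClosed_subset (isClosed_eq hdc continuous_const) ?_
    intro y hy
    rw [Metric.cthickening_eq_preimage_infEDist]
    simp only [Set.mem_preimage, Set.mem_Iic]
    rw [ENNReal.le_ofReal_iff_toReal_le (Metric.infEDist_ne_top hne) hε.le]
    exact (show Metric.infDist y A = ε from hy).le
  obtain ⟨m, hm, hmS⟩ : ∃ m : ℝ, 0 < m ∧ ∀ y, Metric.infDist y A = ε → m ≤ V y := by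
    rcases Set.eq_empty_or_nonempty {y | Metric.infDist y A = ε} with h | h
    · refine ⟨1, one_pos, fun y hy => ?_⟩
      have : y ∈ {y | Metric.infDist y A = ε} := hy
      rw [h] at this
      exact this.elim
    · obtain ⟨z, hz, hzm⟩ := hS.exists_isMinOn h
        (hV.continuousOn.mono fun y hy => hmem y (le_of_eq hy))
      refine ⟨V z, hVpos z ⟨hmem z (le_of_eq hz), fun hzA => ?_⟩, fun y hy => hzm hy⟩
      have hz' : Metric.infDist z A = ε := hz
      rw [Metric.infDist_zero_of_mem hzA] at hz'
      exact hε.ne hz'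
  have hU : IsOpen (D ∩ V ⁻¹' Set.Iio m) := hV.continuousOn.isOpen_inter_preimage hD isOpen_Iio
  obtain ⟨δ, hδ, hδU⟩ := hA.exists_thickening_subset_open hU
    (fun y hy => ⟨hAD hy, by simpa [hV0 y hy] using hm⟩)
  refine ⟨min δ ε, lt_min hδ hε, fun x hx hx0 t ht => ?_⟩
  by_contra! hcon
  have hxc : ContinuousOn (fun s => Metric.infDist (x s) A) (Set.Ici 0) := fun s hs =>
    (hdc.continuousAt.comp (hx s hs).continuousAt).continuousWithinAt
  have hx0ε := hx0.trans_le (min_le_right _ _)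
  have hx0V : V (x 0) < m :=
    (hδU ((Metric.mem_thickening_iff_infDist_lt hne).2 (hx0.trans_le (min_le_left _ _)))).2
  have ivt : ∀ s, 0 ≤ s → ε ≤ Metric.infDist (x s) A →
      ∃ r ∈ Set.Icc 0 s, Metric.infDist (x r) A = ε := fun s hs h =>
    intermediate_value_Icc hs (hxc.mono fun r hr => hr.1) ⟨hx0ε.le, h⟩
  have hK : IsCompact (Set.Icc 0 t ∩ (fun s => Metric.infDist (x s) A) ⁻¹' {ε}) :=
    isCompact_Icc.of_isClosed_subset
      ((hxc.mono fun r hr => hr.1).preimage_isClosed_of_isClosed isClosed_Icc isClosed_singleton)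
      Set.inter_subset_left
  obtain ⟨r, hr, hrε⟩ := ivt t ht hcon
  obtain ⟨T, ⟨hT, hTε⟩, hTmin⟩ := hK.exists_isLeast ⟨r, hr, hrε⟩
  have hTε' : Metric.infDist (x T) A = ε := hTε
  have hle : ∀ s ∈ Set.Icc 0 T, Metric.infDist (x s) A ≤ ε := by
    intro s hs
    by_contra! h
    obtain ⟨q, hq, hqε⟩ := ivt s hs.1 h.le
    have h1 : T ≤ q := hTmin ⟨⟨hq.1, hq.2.trans (hs.2.trans hT.2)⟩, hqε⟩
    have h2 : s = T := le_antisymm hs.2 (h1.trans hq.2)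
    rw [h2, hTε'] at h
    exact lt_irrefl _ h
  have hW : ∀ s ∈ Set.Icc 0 T, HasDerivAt (fun s => V (x s)) (fderiv ℝ V (x s) (f (x s))) s :=
    fun s hs => (hdiff _ (hmem _ (hle s hs))).hasFDerivAt.comp_hasDerivAt s (hx s hs.1)
  have hanti : AntitoneOn (fun s => V (x s)) (Set.Icc 0 T) := by
    refine antitoneOn_of_deriv_nonpos (convex_Icc 0 T)
      (fun s hs => (hW s hs).continuousAt.continuousWithinAt)
      (fun s hs => (hW s (interior_subset hs)).differentiableAt.differentiableWithinAt) ?_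
    intro s hs
    rw [(hW s (interior_subset hs)).deriv]
    exact hlie' _ (hmem _ (hle s (interior_subset hs)))
  have h1 : V (x T) ≤ V (x 0) := hanti ⟨le_rfl, hT.1⟩ ⟨hT.1, le_rfl⟩ hT.1
  have h2 := hmS _ hTε'
  linarith
end

section
/- (Uniform attractivity part of the Lyapunov sufficient condition for UAS.) Let A ⊂ ℝⁿ be a compact set, let D ⊆ ℝⁿ be an open set containing A, let f : ℝⁿ → ℝⁿ be continuous, and let V : D → ℝ be continuously differentiable with V(x) = 0 for all x ∈ A, V(x) > 0 for all x ∈ D \ A, and ∇V(x)·f(x) < 0 for all x ∈ D \ A. Then there exists ρ > 0 such that every solution x : [0, ∞) → ℝⁿ of ẋ = f(x) with dist(x(0), A) < ρ satisfies dist(x(t), A) → 0 as t → ∞. -/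
open scoped RealInnerProductSpace

/-- decay along a solution -/
theorem decay_aux {E : Type*} [NormedAddCommGroup E] [NormedSpace ℝ E] (D : Set E) (hD : IsOpen D)
    (f : E → E) (V : E → ℝ) (hV : ContDiffOn ℝ 1 V D) (x : ℝ → E)
    (hx : ∀ t : ℝ, 0 ≤ t → HasDerivAt x (f (x t)) t) (T δ : ℝ) (hT : 0 ≤ T)
    (hmem : ∀ t, 0 ≤ t → t ≤ T → x t ∈ D)
    (hδ : ∀ t, 0 ≤ t → t ≤ T → fderiv ℝ V (x t) (f (x t)) ≤ -δ) :
    V (x T) ≤ V (x 0) - δ * T := by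
  have hder : ∀ t, 0 ≤ t → t ≤ T →
      HasDerivAt (fun s => V (x s)) (fderiv ℝ V (x t) (f (x t))) t := by
    intro t h0 h1
    have h2 : DifferentiableAt ℝ V (x t) :=
      (hV.differentiableOn (by norm_num)).differentiableAt (hD.mem_nhds (hmem t h0 h1))
    exact h2.hasFDerivAt.comp_hasDerivAt t (hx t h0)
  have := Convex.image_sub_le_mul_sub_of_deriv_le (convex_Icc (0:ℝ) T)
    (f := fun s => V (x s))
    (fun t ht => (hder t ht.1 ht.2).continuousAt.continuousWithinAt)
    (fun t ht => by
      rw [interior_Icc] at ht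
      exact (hder t ht.1.le ht.2.le).differentiableAt.differentiableWithinAt)
    (C := -δ) (fun t ht => by
      rw [interior_Icc] at ht
      rw [(hder t ht.1.le ht.2.le).deriv]
      exact hδ t ht.1.le ht.2.le) 0 ⟨le_rfl, hT⟩ T ⟨hT, le_rfl⟩ hT
  simp only [sub_zero] at this
  linarith

/-- a continuous positive function on a compact set is bounded below -/
theorem pos_lower_aux {E : Type*} [TopologicalSpace E] (K : Set E) (hK : IsCompact K) (g : E → ℝ)
    (hg : ContinuousOn g K) (hpos : ∀ y ∈ K, 0 < g y) : ∃ m : ℝ, 0 < m ∧ ∀ y ∈ K, m ≤ g y := by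
  rcases K.eq_empty_or_nonempty with h | h
  · exact ⟨1, one_pos, by simp [h]⟩
  · obtain ⟨y, hy, hmin⟩ := hK.exists_isMinOn h hg
    exact ⟨g y, hpos y hy, fun z hz => hmin hz⟩

/-- uniform attractivity part of the Lyapunov sufficient condition for UAS:
if `V` is a Lyapunov function for the compact set `A` on the open set `D ⊇ A`, then there exists
`ρ > 0` such that every solution of `ẋ = f(x)` starting within distance `ρ` of `A` satisfies
`dist(x(t), A) → 0` as `t → ∞`. -/
theorem stmt_11 (n : ℕ) (A D : Set (EuclideanSpace ℝ (Fin n)))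
    (hA : IsCompact A) (hD : IsOpen D) (hAD : A ⊆ D)
    (f : EuclideanSpace ℝ (Fin n) → EuclideanSpace ℝ (Fin n)) (hf : Continuous f)
    (V : EuclideanSpace ℝ (Fin n) → ℝ) (hV : ContDiffOn ℝ 1 V D)
    (hV0 : ∀ x ∈ A, V x = 0)
    (hVpos : ∀ x ∈ D \ A, 0 < V x)
    (hlie : ∀ x ∈ D \ A, ⟪gradient V x, f x⟫ < 0) :
    ∃ ρ : ℝ, 0 < ρ ∧
      ∀ x : ℝ → EuclideanSpace ℝ (Fin n),
        (∀ t : ℝ, 0 ≤ t → HasDerivAt x (f (x t)) t) →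
        Metric.infDist (x 0) A < ρ →
        Filter.Tendsto (fun t => Metric.infDist (x t) A) Filter.atTop (nhds 0) := by
  rcases A.eq_empty_or_nonempty with rfl | hne
  · exact ⟨1, one_pos, fun x _ _ => by simp [Metric.infDist_empty]⟩
  have hVc : ContinuousOn V D := hV.continuousOn
  have hLc : ContinuousOn (fun y => fderiv ℝ V y (f y)) D :=
    (hV.continuousOn_fderiv_of_isOpen hD le_rfl).clm_apply hf.continuousOn
  have hlie' : ∀ y ∈ D \ A, fderiv ℝ V y (f y) < 0 := by
    intro y hy
    have := hlie y hy
    rwa [gradient, InnerProductSpace.toDual_symm_apply] at this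
  have hVnn : ∀ y ∈ D, 0 ≤ V y := by
    intro y hy
    by_cases h : y ∈ A
    · exact (hV0 y h).ge
    · exact (hVpos y ⟨hy, h⟩).le
  have hLnp : ∀ y ∈ D, fderiv ℝ V y (f y) ≤ 0 := by
    intro y hy
    by_cases h : y ∈ A
    · have hmin : IsLocalMin V y := by
        filter_upwards [hD.mem_nhds hy] with z hz
        rw [hV0 y h]
        exact hVnn z hz
      rw [hmin.fderiv_eq_zero]
      simp
    · exact (hlie' y ⟨hy, h⟩).le
  have hcd : Continuous (fun y => Metric.infDist y A) := Metric.continuous_infDist_pt A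
  obtain ⟨r, hr, hrD⟩ := hA.exists_cthickening_subset_open hD hAD
  have hK : IsCompact (Metric.cthickening r A) := hA.cthickening
  have hKmem : ∀ y, Metric.infDist y A ≤ r → y ∈ Metric.cthickening r A := by
    intro y hy
    rw [Metric.cthickening_eq_preimage_infEDist, Set.mem_preimage, Set.mem_Iic,
      ← ENNReal.ofReal_toReal (Metric.infEDist_ne_top hne)]
    exact ENNReal.ofReal_le_ofReal hy
  have hnotA : ∀ y, 0 < Metric.infDist y A → y ∉ A := by
    intro y hy hyA
    rw [Metric.infDist_zero_of_mem hyA] at hy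
    exact lt_irrefl _ hy
  -- lower bounds of V away from A
  have hlow : ∀ ε, 0 < ε → ∃ m : ℝ, 0 < m ∧
      ∀ y, Metric.infDist y A ≤ r → ε ≤ Metric.infDist y A → m ≤ V y := by
    intro ε hε
    obtain ⟨m, hm, h⟩ := pos_lower_aux (Metric.cthickening r A ∩ {y | ε ≤ Metric.infDist y A})
      (hK.inter_right (isClosed_le continuous_const hcd)) V
      (hVc.mono (Set.inter_subset_left.trans hrD))
      (fun y hy => hVpos y ⟨hrD hy.1, hnotA y (hε.trans_le hy.2)⟩)
    exact ⟨m, hm, fun y h1 h2 => h y ⟨hKmem y h1, h2⟩⟩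
  obtain ⟨m, hm, hmV⟩ := hlow r hr
  -- choose ρ
  have hopen : IsOpen (D ∩ V ⁻¹' Set.Iio m) := hVc.isOpen_inter_preimage hD isOpen_Iio
  obtain ⟨ρ, hρ, hρU⟩ := hA.exists_cthickening_subset_open hopen
    (fun y hy => ⟨hAD hy, by simp [hV0 y hy, hm]⟩)
  refine ⟨min ρ r, lt_min hρ hr, ?_⟩
  intro x hx hx0
  have hx0V : V (x 0) < m := by
    have : x 0 ∈ Metric.cthickening ρ A := by
      rw [Metric.cthickening_eq_preimage_infEDist, Set.mem_preimage, Set.mem_Iic,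
        ← ENNReal.ofReal_toReal (Metric.infEDist_ne_top hne)]
      exact ENNReal.ofReal_le_ofReal (hx0.le.trans (min_le_left _ _))
    exact (hρU this).2
  have hxc : ContinuousOn (fun t => Metric.infDist (x t) A) (Set.Ici 0) :=
    fun t ht => (hcd.continuousAt.comp (hx t ht).continuousAt).continuousWithinAt
  -- invariance
  have hinv : ∀ t, 0 ≤ t → Metric.infDist (x t) A < r := by
    intro t1 ht1
    by_contra! hcon
    have hScl : IsCompact (Set.Icc 0 t1 ∩ (fun t => Metric.infDist (x t) A) ⁻¹' Set.Ici r) :=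
      isCompact_Icc.of_isClosed_subset
        ((hxc.mono Set.Icc_subset_Ici_self).preimage_isClosed_of_isClosed isClosed_Icc isClosed_Ici)
        Set.inter_subset_left
    obtain ⟨T, ⟨hT1, hT2⟩, hTl⟩ := hScl.exists_isLeast ⟨t1, ⟨ht1, le_rfl⟩, hcon⟩
    have hT2' : r ≤ Metric.infDist (x T) A := hT2
    have hbelow : ∀ s, 0 ≤ s → s < T → Metric.infDist (x s) A < r := by
      intro s hs hsT
      by_contra! h
      exact absurd (hTl ⟨⟨hs, hsT.le.trans hT1.2⟩, h⟩) (not_le.2 hsT)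
    obtain ⟨s, hs, hsr⟩ := intermediate_value_Icc hT1.1 (hxc.mono Set.Icc_subset_Ici_self)
      (show r ∈ Set.Icc _ _ from ⟨(hx0.le.trans (min_le_right _ _)), hT2'⟩)
    have hsT : s = T := by
      rcases hs.2.lt_or_eq with h | h
      · exact absurd hsr (hbelow s hs.1 h).ne
      · exact h
    subst hsT
    have hsr' : Metric.infDist (x s) A = r := hsr
    have hm1 : ∀ t, 0 ≤ t → t ≤ s → x t ∈ D := by
      intro t h0 h1
      apply hrD
      apply hKmem
      rcases h1.lt_or_eq with h | h
      · exact (hbelow t h0 h).le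
      · rw [h]; exact hsr'.le
    have := decay_aux D hD f V hV x hx s 0 hT1.1 hm1
      (fun t h0 h1 => by simpa using hLnp _ (hm1 t h0 h1))
    have h3 := hmV (x s) hsr'.le hsr'.ge
    linarith
  have hxD : ∀ t, 0 ≤ t → x t ∈ D := fun t ht => hrD (hKmem _ (hinv t ht).le)
  -- V gets below any level, and stays
  have hV0lim : ∀ c, 0 < c → ∃ T, 0 ≤ T ∧ V (x T) < c := by
    intro c hc
    by_contra! hcon
    have hcl : IsCompact (Metric.cthickening r A ∩ V ⁻¹' Set.Ici c) :=
      hK.of_isClosed_subset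
        ((hVc.mono hrD).preimage_isClosed_of_isClosed hK.isClosed isClosed_Ici)
        Set.inter_subset_left
    obtain ⟨δ, hδ, hδV⟩ := pos_lower_aux _ hcl (fun y => - fderiv ℝ V y (f y))
      (hLc.neg.mono (Set.inter_subset_left.trans hrD))
      (fun y hy => by
        have : y ∉ A := fun h => by
          have h2 : c ≤ V y := hy.2
          rw [hV0 y h] at h2
          linarith
        have := hlie' y ⟨hrD hy.1, this⟩
        simpa using this)
    have hT : 0 ≤ V (x 0) / δ := div_nonneg (hVnn _ (hxD 0 le_rfl)) hδ.le
    have := decay_aux D hD f V hV x hx (V (x 0) / δ) δ hT (fun t h0 _ => hxD t h0)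
      (fun t h0 _ => by
        have := hδV (x t) ⟨hKmem _ (hinv t h0).le, hcon t h0⟩
        linarith)
    rw [mul_div_cancel₀ _ hδ.ne'] at this
    have := hcon _ hT
    linarith
  have hstay : ∀ T, 0 ≤ T → ∀ t, T ≤ t → V (x t) ≤ V (x T) := by
    intro T hT t ht
    have := decay_aux D hD f V hV (fun s => x (s + T))
      (fun s hs => (hx (s + T) (by linarith)).comp_add_const s T) (t - T) 0 (by linarith)
      (fun s h0 _ => hxD _ (by linarith))
      (fun s h0 _ => by simpa using hLnp _ (hxD (s + T) (by linarith)))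
    simpa using this
  rw [Metric.tendsto_atTop]
  intro ε hε
  obtain ⟨μ, hμ, hμV⟩ := hlow ε hε
  obtain ⟨T, hT, hTV⟩ := hV0lim μ hμ
  refine ⟨T, fun t ht => ?_⟩
  rw [Real.dist_eq, sub_zero, abs_of_nonneg Metric.infDist_nonneg]
  by_contra! h
  have h1 := hμV (x t) (hinv t (hT.trans ht)).le h
  have h2 := hstay T hT t ht
  linarith
end

section
/- (Regions of attraction from Lyapunov sublevel sets.) Let A ⊂ ℝⁿ be a compact set, let D ⊆ ℝⁿ be an open set containing A, let f : ℝⁿ → ℝⁿ be continuous, and let V : D → ℝ be continuously differentiable with V(x) = 0 for all x ∈ A, V(x) > 0 for all x ∈ D \ A, and ∇V(x)·f(x) < 0 for all x ∈ D \ A. Let c > 0 and suppose the sublevel set V^c := {x ∈ D : V(x) ≤ c} is compact. Then V^c is forward invariant and is a region of attraction of A: every solution x : [0, ∞) → ℝⁿ of ẋ = f(x) with x(0) ∈ V^c satisfies x(t) ∈ V^c for all t ≥ 0 and dist(x(t), A) → 0 as t → ∞. -/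
open scoped RealInnerProductSpace

theorem decr_aux {E : Type*} [NormedAddCommGroup E] [NormedSpace ℝ E] {D : Set E}
    {V : E → ℝ} {f : E → E} (hd : ∀ y ∈ D, DifferentiableAt ℝ V y) {x : ℝ → E}
    (hx : ∀ t : ℝ, 0 ≤ t → HasDerivAt x (f (x t)) t) {a b m : ℝ} (ha : 0 ≤ a) (hab : a ≤ b)
    (hin : ∀ t ∈ Set.Icc a b, x t ∈ D ∧ fderiv ℝ V (x t) (f (x t)) ≤ -m) :
    V (x b) ≤ V (x a) - m * (b - a) := by
  have hder : ∀ t ∈ Set.Icc a b,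
      HasDerivAt (fun t => V (x t) + m * t) (fderiv ℝ V (x t) (f (x t)) + m) t := by
    intro t ht
    have h1 := (hd _ (hin t ht).1).hasFDerivAt.comp_hasDerivAt t (hx t (ha.trans ht.1))
    have h2 := (hasDerivAt_id t).const_mul m
    rw [mul_one] at h2
    exact h1.add h2
  have := antitoneOn_of_deriv_nonpos (convex_Icc a b)
    (fun t ht => (hder t ht).continuousAt.continuousWithinAt)
    (fun t ht => (hder t (interior_subset ht)).differentiableAt.differentiableWithinAt)
    (fun t ht => by
      rw [(hder t (interior_subset ht)).deriv]
      linarith [(hin t (interior_subset ht)).2])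
    (Set.left_mem_Icc.2 hab) (Set.right_mem_Icc.2 hab) hab
  simp only at this
  linarith

/-- regions of attraction from Lyapunov sublevel sets: if `V` is a Lyapunov
function for the compact set `A` on the open set `D ⊇ A`, `c > 0`, and the sublevel set
`V^c = {x ∈ D : V(x) ≤ c}` is compact, then `V^c` is forward invariant and is a region of
attraction of `A`. -/
theorem stmt_12 (n : ℕ) (A D : Set (EuclideanSpace ℝ (Fin n)))
    (hA : IsCompact A) (hD : IsOpen D) (hAD : A ⊆ D)
    (f : EuclideanSpace ℝ (Fin n) → EuclideanSpace ℝ (Fin n)) (hf : Continuous f)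
    (V : EuclideanSpace ℝ (Fin n) → ℝ) (hV : ContDiffOn ℝ 1 V D)
    (hV0 : ∀ x ∈ A, V x = 0)
    (hVpos : ∀ x ∈ D \ A, 0 < V x)
    (hlie : ∀ x ∈ D \ A, ⟪gradient V x, f x⟫ < 0)
    (c : ℝ) (hc : 0 < c) (hcomp : IsCompact {x ∈ D | V x ≤ c}) :
    ∀ x : ℝ → EuclideanSpace ℝ (Fin n),
      (∀ t : ℝ, 0 ≤ t → HasDerivAt x (f (x t)) t) →
      x 0 ∈ {x ∈ D | V x ≤ c} →
      (∀ t : ℝ, 0 ≤ t → x t ∈ {x ∈ D | V x ≤ c}) ∧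
        Filter.Tendsto (fun t => Metric.infDist (x t) A) Filter.atTop (nhds 0) := by
  intro x hx hx0
  have hd : ∀ y ∈ D, DifferentiableAt ℝ V y := fun y hy =>
    (hV.differentiableOn (by norm_num)).differentiableAt (hD.mem_nhds hy)
  have hlie' : ∀ y ∈ D \ A, fderiv ℝ V y (f y) < 0 := by
    intro y hy
    have := hlie y hy
    rwa [gradient, InnerProductSpace.toDual_symm_apply] at this
  have hVnn : ∀ y ∈ D, 0 ≤ V y := by
    intro y hy
    by_cases hyA : y ∈ A
    · exact (hV0 y hyA).ge
    · exact (hVpos y ⟨hy, hyA⟩).le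
  have hL : ∀ y ∈ D, fderiv ℝ V y (f y) ≤ -0 := by
    intro y hy
    by_cases hyA : y ∈ A
    · have : IsLocalMin V y := by
        filter_upwards [hD.mem_nhds hy] with z hz
        rw [hV0 y hyA]
        exact hVnn z hz
      simp [this.fderiv_eq_zero]
    · simpa using (hlie' y ⟨hy, hyA⟩).le
  have hVc : ContinuousOn V {x ∈ D | V x ≤ c} := hV.continuousOn.mono fun y hy => hy.1
  have hLc : ContinuousOn (fun y => fderiv ℝ V y (f y)) D :=
    (hV.continuousOn_fderiv_of_isOpen hD le_rfl).clm_apply hf.continuousOn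
  have hxc : ContinuousOn x (Set.Ici 0) := fun t ht =>
    (hx t ht).continuousAt.continuousWithinAt
  have hinv : ∀ t : ℝ, 0 ≤ t → x t ∈ {x ∈ D | V x ≤ c} := by
    intro T hT
    have hsub : Set.Icc 0 T ⊆ x ⁻¹' {x ∈ D | V x ≤ c} := by
      apply IsClosed.Icc_subset_of_forall_exists_gt
      · rw [Set.inter_comm]
        exact (hxc.mono Set.Icc_subset_Ici_self).preimage_isClosed_of_isClosed isClosed_Icc
          hcomp.isClosed
      · exact hx0
      · rintro s ⟨hs, hs0, hsT⟩ y hy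
        have hev : ∀ᶠ t in nhds s, x t ∈ D :=
          (hx s hs0).continuousAt.eventually_mem (hD.mem_nhds hs.1)
        obtain ⟨e, he, hball⟩ := Metric.eventually_nhds_iff.1 hev
        have hy' : s < y := hy
        have hlt : s < min y (s + e / 2) := lt_min hy' (by linarith)
        have hin : ∀ t ∈ Set.Icc s (min y (s + e / 2)), x t ∈ D := by
          intro t ht
          apply hball
          have := ht.2.trans (min_le_right _ _)
          rw [Real.dist_eq, abs_of_nonneg (by linarith [ht.1])]
          linarith
        refine ⟨min y (s + e / 2), ⟨hin _ (Set.right_mem_Icc.2 hlt.le), ?_⟩, hlt, min_le_left _ _⟩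
        have := decr_aux hd hx hs0 hlt.le (fun t ht => ⟨hin t ht, hL _ (hin t ht)⟩)
        have h2 : V (x s) ≤ c := hs.2
        linarith
    exact hsub ⟨hT, le_rfl⟩
  refine ⟨hinv, ?_⟩
  have hsmall : ∀ δ > 0, ∃ T : ℝ, ∀ t ≥ T, V (x t) < δ := by
    intro δ hδ
    have hK : IsCompact ({x ∈ D | V x ≤ c} ∩ V ⁻¹' Set.Ici δ) :=
      hcomp.of_isClosed_subset (hVc.preimage_isClosed_of_isClosed hcomp.isClosed isClosed_Ici)
        Set.inter_subset_left
    obtain ⟨m, hm, hmK⟩ := hK.exists_forall_le' (f := fun y => - fderiv ℝ V y (f y)) (a := 0)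
      (hLc.neg.mono fun y hy => hy.1.1) (by
        rintro y ⟨hy, hyδ⟩
        have hyδ' : δ ≤ V y := hyδ
        have := hlie' y ⟨hy.1, fun h => by linarith [hV0 y h]⟩
        linarith)
    have hex : ∃ T : ℝ, 0 ≤ T ∧ V (x T) < δ := by
      by_contra! hcon
      have hT : 0 ≤ c / m := by positivity
      have := decr_aux (m := m) hd hx le_rfl hT (fun t ht => ⟨(hinv t ht.1).1, by
        have := hmK (x t) ⟨hinv t ht.1, hcon t ht.1⟩
        linarith⟩)
      have h1 := hcon _ hT
      have h2 : V (x 0) ≤ c := hx0.2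
      have h3 : m * (c / m - 0) = c := by field_simp; ring
      linarith
    obtain ⟨T, hT0, hT⟩ := hex
    refine ⟨T, fun t ht => ?_⟩
    have := decr_aux hd hx hT0 ht
      (fun s hs => ⟨(hinv s (hT0.trans hs.1)).1, hL _ (hinv s (hT0.trans hs.1)).1⟩)
    linarith
  rw [Metric.tendsto_atTop]
  intro ε hε
  have hK : IsCompact ({x ∈ D | V x ≤ c} ∩ {y | ε ≤ Metric.infDist y A}) :=
    hcomp.inter_right (isClosed_le continuous_const (Metric.continuous_infDist_pt A))
  obtain ⟨δ, hδ, hδK⟩ := hK.exists_forall_le' (f := V) (a := 0)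
    (hVc.mono Set.inter_subset_left) (by
      rintro y ⟨hy, hyε⟩
      refine hVpos y ⟨hy.1, fun h => ?_⟩
      have hyε' : ε ≤ Metric.infDist y A := hyε
      rw [Metric.infDist_zero_of_mem h] at hyε'
      linarith)
  obtain ⟨T, hT⟩ := hsmall δ hδ
  refine ⟨max T 0, fun t ht => ?_⟩
  rw [Real.dist_eq, sub_zero, abs_of_nonneg Metric.infDist_nonneg]
  by_contra! hcon
  have h1 := hδK (x t) ⟨hinv t ((le_max_right _ _).trans ht), hcon⟩
  have h2 := hT t ((le_max_left _ _).trans ht)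
  linarith
end
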